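/- Let λ₀ be a non-trivial primitive d-invariant rational lamination, E the m_d-grand orbit of a finite subset of Q/Z, and λ the restriction of λ₀ to (Q/Z \ E) × (Q/Z \ E). Then λ₀ is the smallest closed equivalence relation on Q/Z containing λ. -/

import Mathlib

noncomputable section
open Set Function

/-- The circle `ℝ/ℤ`. -/
abbrev Circle1 := AddCircle (1 : ℝ)

/-- Multiplication by `d` on the circle. -/
def md (d : ℕ) (x : Circle1) : Circle1 := d • x

/-- The rational angles `ℚ/ℤ ⊆ ℝ/ℤ`. -/
def ratC : Set Circle1 := {x | ∃ q : ℚ, x = ((q : ℝ) : Circle1)}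

/-- `A` and `B` are unlinked: `B` is contained in a single connected
component of the complement of `A`. -/
def Unlinked (A B : Set Circle1) : Prop :=
  ∃ x ∈ Aᶜ, B ⊆ connectedComponentIn Aᶜ x

/-- `C` is a connected component of `S`. -/
def IsCompOf (C S : Set Circle1) : Prop :=
  ∃ x ∈ S, C = connectedComponentIn S x

/-- The class of `x` under a relation `r`. -/
def relClass (r : Circle1 → Circle1 → Prop) (x : Circle1) : Set Circle1 := {y | r x y}

/-- A rational lamination: a closed equivalence relation on `ℚ/ℤ` with finite,
pairwise unlinked classes. -/
structure RatLam where
  rel : Circle1 → Circle1 → Prop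
  rel_rat : ∀ x y, rel x y → x ∈ ratC ∧ y ∈ ratC
  refl : ∀ x ∈ ratC, rel x x
  symm : ∀ x y, rel x y → rel y x
  trans : ∀ x y z, rel x y → rel y z → rel x z
  closed' : ∀ x ∈ ratC, ∀ y ∈ ratC,
    (x, y) ∈ closure {p : Circle1 × Circle1 | rel p.1 p.2} → rel x y
  finiteClass : ∀ x, (relClass rel x).Finite
  unlinkedClass : ∀ x y, ¬ rel x y → Unlinked (relClass rel x) (relClass rel y)

/-- `m_d` maps `A` onto `B` in a consecutive-preserving way: the image of `A` is `B`
and the connected components of the complement of `A` are sent to components of the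
complement of `B` endpoint-wise. -/
def ConsecutiveImage (d : ℕ) (A B : Set Circle1) : Prop :=
  md d '' A = B ∧
    ∀ C, IsCompOf C Aᶜ → ∃ C', IsCompOf C' Bᶜ ∧ frontier C' = md d '' frontier C

/-- A `d`-invariant rational lamination. -/
structure InvRatLam (d : ℕ) extends RatLam where
  invariant : ∀ x ∈ ratC,
    ConsecutiveImage d (relClass rel x) (relClass rel (md d x))

/-- `m_d : A → m_d(A)` is `δ`-to-one. -/
def classDeg (d : ℕ) (A : Set Circle1) (δ : ℕ) : Prop :=
  ∀ y ∈ md d '' A, Set.ncard {x | x ∈ A ∧ md d x = y} = δ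

/-- The `λ`-unlinked relation on irrational angles: `θ ~ θ'` iff they lie in the same
connected component of the complement of every `λ`-class. -/
def UnlRel (r : Circle1 → Circle1 → Prop) (θ θ' : Circle1) : Prop :=
  θ ∉ ratC ∧ θ' ∉ ratC ∧
    (θ = θ' ∨ ∀ x ∈ ratC, θ' ∈ connectedComponentIn (relClass r x)ᶜ θ)

/-- `L` is a `λ`-unlinked class. -/
def IsUnlClass (r : Circle1 → Circle1 → Prop) (L : Set Circle1) : Prop :=
  ∃ θ, θ ∉ ratC ∧ L = {θ' | UnlRel r θ θ'}

/-- The support of a relation: union of its nontrivial classes. -/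
def suppRel (r : Circle1 → Circle1 → Prop) : Set Circle1 := {x | ∃ y, r x y ∧ y ≠ x}

/-- The `m_d`-grand orbit of a set `F`. -/
def grandOrbit (d : ℕ) (F : Set Circle1) : Set Circle1 :=
  {x | ∃ n m : ℕ, (md d)^[n] x ∈ (md d)^[m] '' F}

/-- A lamination (given by the relation `r`) is primitive if no `λ`-class meets the
closures of two distinct infinite `λ`-unlinked classes. -/
def PrimitiveLam (d : ℕ) (r : Circle1 → Circle1 → Prop) : Prop :=
  ¬ ∃ (L L' : Set Circle1) (x : Circle1),
      IsUnlClass r L ∧ L.Infinite ∧ IsUnlClass r L' ∧ L'.Infinite ∧ L ≠ L' ∧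
      x ∈ ratC ∧ (relClass r x ∩ closure L).Nonempty ∧
      (relClass r x ∩ closure L').Nonempty

/-- A closed equivalence relation on `ℚ/ℤ`. -/
def ClosedEqvRat (r : Circle1 → Circle1 → Prop) : Prop :=
  (∀ x y, r x y → x ∈ ratC ∧ y ∈ ratC) ∧ (∀ x ∈ ratC, r x x) ∧
  (∀ x y, r x y → r y x) ∧ (∀ x y z, r x y → r y z → r x z) ∧
  (∀ x ∈ ratC, ∀ y ∈ ratC,
    (x, y) ∈ closure {p : Circle1 × Circle1 | r p.1 p.2} → r x y)

/-!
Lift the lamination to a relation on the line, and call an equivalent pair `(x, y)` a leaf.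

Primitivity implies that among two boundary leaves of a class at least one is a limit of leaves
from the inside: a boundary leaf that is not such a limit bounds an infinite unlinked class. Hence a
closed equivalence relation containing all leaves that are limits of leaves contains the lamination,
and it suffices to approximate each of these by leaves whose endpoints avoid the grand orbit `E`.

An approached leaf is a limit of approached leaves, and near it the lamination pulls back under
powers of `m_d`. Suppose that no leaf near it avoids `E`. Every leaf there falls into a finite set
of leaves, so two nearby approached leaves eventually have the same image. The pull-back then
contains an affine contraction preserving the nearby leaves; the fixed points of such contractions
are preperiodic leaves with a common preperiod that accumulate on an approached leaf. A preperiodic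
leaf that falls into a finite invariant set does so within its preperiod, which only finitely many
angles can do, so most of these leaves avoid `E`, a contradiction.
-/

open Filter Topology

/-! ### Angles of the circle -/

section FiniteOrder

variable {G : Type*} {d : ℕ} {g : G}

theorem exists_pow_add_smul_eq_of_isOfFinAddOrder [AddMonoid G] (hg : IsOfFinAddOrder g) (d : ℕ) :
    ∃ n q : ℕ, 0 < q ∧ d ^ (n + q) • g = d ^ n • g := by
  have : Finite (AddSubmonoid.multiples g) := hg.finite_multiples
  obtain ⟨m, n, hmn, heq⟩ := Finite.exists_ne_map_eq_of_infinite fun n : ℕ ↦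
    (⟨d ^ n • g, d ^ n, rfl⟩ : AddSubmonoid.multiples g)
  wlog hlt : m < n generalizing m n
  · exact this n m hmn.symm heq.symm (hmn.lt_or_gt.resolve_left hlt)
  refine ⟨m, n - m, by omega, ?_⟩
  rw [Nat.add_sub_of_le hlt.le]
  exact (congrArg Subtype.val heq).symm

theorem pow_add_mul_smul_eq [AddMonoid G] {n q : ℕ} (hper : d ^ (n + q) • g = d ^ n • g) (k : ℕ) :
    d ^ (n + q * k) • g = d ^ n • g := by
  induction k with
  | zero => rfl
  | succ k ih =>
    calc d ^ (n + q * (k + 1)) • g = d ^ (q + (n + q * k)) • g := by ring_nf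
      _ = d ^ q • d ^ n • g := by rw [pow_add, mul_smul, ih]
      _ = d ^ n • g := by rw [← mul_smul, ← pow_add, add_comm, hper]

theorem isOfFinAddOrder_of_pow_smul_eq [AddGroup G] (hd : 2 ≤ d) {m n : ℕ} (hmn : m ≠ n)
    (h : d ^ m • g = d ^ n • g) : IsOfFinAddOrder g := by
  by_contra hg
  exact hmn (Nat.pow_right_injective hd (injective_nsmul_iff_not_isOfFinAddOrder.2 hg h))

end FiniteOrder

namespace Circle1

variable {x y : ℝ}

theorem coe_eq_coe_iff : (x : Circle1) = y ↔ ∃ j : ℤ, y = x + j := by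
  rw [eq_comm, ← sub_eq_zero, ← AddCircle.coe_sub, AddCircle.coe_eq_zero_iff]
  simp only [zsmul_one, eq_comm (b := y - x), sub_eq_iff_eq_add']

theorem coe_add_intCast (x : ℝ) (j : ℤ) : ((x + j : ℝ) : Circle1) = x :=
  (coe_eq_coe_iff.2 ⟨j, rfl⟩).symm

theorem coe_ne_coe (hxy : x < y) (hyx : y < x + 1) : (x : Circle1) ≠ y := by
  rw [Ne, AddCircle.coe_eq_coe_iff_of_mem_Ico (a := x) ⟨le_rfl, by simp⟩ ⟨hxy.le, hyx⟩]
  exact hxy.ne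

theorem exists_add_int_mem_Ico (x a : ℝ) : ∃ j : ℤ, x + j ∈ Ico a (a + 1) := by
  simpa using (existsUnique_add_zsmul_mem_Ico one_pos x a).exists

theorem isOfFinAddOrder_coe_iff : IsOfFinAddOrder (x : Circle1) ↔ ¬Irrational x := by
  simp [AddCircle.isOfFinAddOrder_iff_exists_rat_eq_div, Irrational]

theorem coe_mem_ratC_iff : (x : Circle1) ∈ ratC ↔ ¬Irrational x := by
  rw [Irrational, not_not]
  constructor
  · rintro ⟨q, hq⟩
    obtain ⟨j, hj⟩ := coe_eq_coe_iff.1 hq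
    exact ⟨q - j, by push_cast; linarith⟩
  · rintro ⟨q, rfl⟩
    exact ⟨q, rfl⟩

theorem eventually_coe_notMem {P : Set Circle1} (hP : P.Finite) (k : ℝ) :
    ∀ᶠ x : ℝ in 𝓝[≠] k, (x : Circle1) ∉ P := by
  have hfar : ∀ᶠ x : ℝ in 𝓝 k, (x : Circle1) ∉ P \ {(k : Circle1)} :=
    (AddCircle.continuous_mk' 1).continuousAt.eventually
      ((hP.subset sdiff_subset).isClosed.isOpen_compl.mem_nhds (by simp))
  filter_upwards [self_mem_nhdsWithin, nhdsWithin_le_nhds hfar,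
    nhdsWithin_le_nhds (Ioo_mem_nhds (sub_one_lt k) (lt_add_one k))] with x hxk hx hmem hxP
  refine hx ⟨hxP, ?_⟩
  rcases lt_or_gt_of_ne hxk with hlt | hlt
  · exact coe_ne_coe hlt (by linarith [hmem.1])
  · exact (coe_ne_coe hlt hmem.2).symm

theorem coe_mem_or_coe_mem_of_isPreconnected {a b c e : ℝ} (hab : a < b) (hbc : b < c)
    (hce : c < e) (hea : e < a + 1) {S : Set Circle1} (hS : IsPreconnected S)
    (hb : (b : Circle1) ∈ S) (he : (e : Circle1) ∈ S) :
    (a : Circle1) ∈ S ∨ (c : Circle1) ∈ S := by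
  by_contra! ⟨ha, hc⟩
  have hopen : IsOpenMap ((↑) : ℝ → Circle1) := QuotientAddGroup.isOpenMap_coe
  have hcover : S ⊆ (↑) '' Ioo a c ∪ (↑) '' Ioo c (a + 1) := by
    intro z hz
    obtain ⟨x, rfl⟩ := QuotientAddGroup.mk_surjective z
    obtain ⟨j, hax, hxa⟩ := exists_add_int_mem_Ico x a
    have hxS : ((x + j : ℝ) : Circle1) ∈ S := by rwa [coe_add_intCast]
    have hne_a : a ≠ x + j := fun h ↦ ha (h ▸ hxS)
    have hne_c : x + j ≠ c := fun h ↦ hc (h ▸ hxS)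
    rcases hne_c.lt_or_gt with hlt | hgt
    · exact .inl ⟨x + j, ⟨hax.lt_of_ne hne_a, hlt⟩, coe_add_intCast x j⟩
    · exact .inr ⟨x + j, ⟨hgt, hxa⟩, coe_add_intCast x j⟩
  obtain ⟨_, -, ⟨x, hx, rfl⟩, ⟨y, hy, hyx⟩⟩ := hS _ _ (hopen _ isOpen_Ioo) (hopen _ isOpen_Ioo)
    hcover ⟨_, hb, b, ⟨hab, hbc⟩, rfl⟩ ⟨_, he, e, ⟨hce, hea⟩, rfl⟩
  exact coe_ne_coe (hx.2.trans hy.1) (by linarith [hx.1, hy.2]) hyx.symm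

theorem coe_mem_connectedComponentIn (hxy : x ≤ y) {S : Set Circle1}
    (hS : ∀ z ∈ Icc x y, (z : Circle1) ∈ S) : (y : Circle1) ∈ connectedComponentIn S x :=
  (isPreconnected_Icc.image _ (AddCircle.continuous_mk' 1).continuousOn).subset_connectedComponentIn
    (mem_image_of_mem _ (left_mem_Icc.2 hxy)) (image_subset_iff.2 hS)
    (mem_image_of_mem _ (right_mem_Icc.2 hxy))

end Circle1

theorem isOfFinAddOrder_of_mem_ratC {z : Circle1} (hz : z ∈ ratC) : IsOfFinAddOrder z := by
  induction z using QuotientAddGroup.induction_on with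
  | H x => exact Circle1.isOfFinAddOrder_coe_iff.2 (Circle1.coe_mem_ratC_iff.1 hz)

theorem smul_mem_ratC {z : Circle1} (n : ℕ) (hz : z ∈ ratC) : n • z ∈ ratC := by
  obtain ⟨q, rfl⟩ := hz
  exact ⟨n * q, by rw [← AddCircle.coe_nsmul, nsmul_eq_mul, Rat.cast_mul, Rat.cast_natCast]⟩

theorem md_iterate (d n : ℕ) (x : Circle1) : (md d)^[n] x = d ^ n • x :=
  smul_iterate_apply d n x

/-! ### Laminations on the line -/

/-- A rational lamination lifted to the line: `R x y` says that the angles `x` and `y` mod `1` are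
rational and equivalent. Unlinkedness of the classes is stated as transversality: two leaves that
cross belong to one class. -/
structure IsLineLamination (R : ℝ → ℝ → Prop) : Prop where
  refl_iff : ∀ {x}, R x x ↔ ¬Irrational x
  symm : ∀ {x y}, R x y → R y x
  trans : ∀ {x y z}, R x y → R y z → R x z
  add_int : ∀ {x y} (j : ℤ), R x y → R x (y + j)
  closed : ∀ {x y}, R x x → R y y → (∃ᶠ p in 𝓝 (x, y), R p.1 p.2) → R x y
  eventually_not : ∀ c k, ∀ᶠ x in 𝓝[≠] k, ¬R c x
  unlinked : ∀ {a b c e}, a < b → b < c → c < e → e < a + 1 → R a c → R b e → R a b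

/-- A line lamination whose classes are mapped onto classes by `x ↦ d * x`, up to integers. -/
structure IsInvariantLineLamination (d : ℕ) (R : ℝ → ℝ → Prop) : Prop
    extends IsLineLamination R where
  two_le : 2 ≤ d
  mul : ∀ {x y}, R x y → R (d * x) (d * y)
  exists_mul_eq : ∀ {x z}, R x x → R (d * x) z → ∃ (y : ℝ) (j : ℤ), R x y ∧ d * y = z + j

namespace IsLineLamination

variable {R : ℝ → ℝ → Prop} {x y : ℝ}

theorem left (h : IsLineLamination R) (hxy : R x y) : R x x :=
  h.trans hxy (h.symm hxy)

theorem right (h : IsLineLamination R) (hxy : R x y) : R y y :=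
  h.trans (h.symm hxy) hxy

theorem add_int_iff (h : IsLineLamination R) (i j : ℤ) : R (x + i) (y + j) ↔ R x y := by
  have shift : ∀ {x y : ℝ} (i j : ℤ), R x y → R (x + i) (y + j) := fun i j hxy ↦
    h.add_int j (h.symm (h.add_int i (h.symm hxy)))
  refine ⟨fun hxy ↦ ?_, shift i j⟩
  simpa [add_assoc] using shift (-i) (-j) hxy

theorem rel_iff_of_coe_eq (h : IsLineLamination R) {x' y' : ℝ} (hx : (x : Circle1) = x')
    (hy : (y : Circle1) = y') : R x y ↔ R x' y' := by
  obtain ⟨i, rfl⟩ := Circle1.coe_eq_coe_iff.1 hx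
  obtain ⟨j, rfl⟩ := Circle1.coe_eq_coe_iff.1 hy
  exact (h.add_int_iff i j).symm

theorem neg (h : IsLineLamination R) : IsLineLamination fun x y ↦ R (-x) (-y) where
  refl_iff := by simp [h.refl_iff]
  symm := h.symm
  trans := h.trans
  add_int j hxy := by simpa [add_comm] using h.add_int (-j) hxy
  closed {x y} hx hy hxy :=
    h.closed hx hy ((continuous_neg.tendsto (x, y)).frequently (p := fun p ↦ R p.1 p.2) hxy)
  eventually_not c k := by
    have hneg : Tendsto Neg.neg (𝓝[≠] k) (𝓝[≠] (-k)) :=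
      tendsto_nhdsWithin_iff.2 ⟨continuous_neg.continuousWithinAt, by
        filter_upwards [self_mem_nhdsWithin] with x hx using neg_injective.ne hx⟩
    exact hneg.eventually (h.eventually_not (-c) (-k))
  unlinked hab hbc hce hea hac hbe :=
    have hce' := h.unlinked (neg_lt_neg hce) (neg_lt_neg hbc) (neg_lt_neg hab) (by linarith)
      (h.symm hbe) (h.symm hac)
    h.trans hac (h.trans (h.symm hce') (h.symm hbe))

end IsLineLamination

namespace IsInvariantLineLamination

variable {d : ℕ} {R : ℝ → ℝ → Prop} {x y z : ℝ}

theorem neg (h : IsInvariantLineLamination d R) :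
    IsInvariantLineLamination d fun x y ↦ R (-x) (-y) where
  toIsLineLamination := h.toIsLineLamination.neg
  two_le := h.two_le
  mul hxy := by simpa using h.mul hxy
  exists_mul_eq hx hz := by
    obtain ⟨y, j, hxy, hy⟩ := h.exists_mul_eq hx (by simpa using hz)
    exact ⟨-y, -j, by simpa using hxy, by push_cast; linarith⟩

theorem pow_pos (h : IsInvariantLineLamination d R) (n : ℕ) : (0 : ℝ) < (d : ℝ) ^ n := by
  have := h.two_le
  positivity

theorem pow_mul (h : IsInvariantLineLamination d R) (n : ℕ) (hxy : R x y) :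
    R ((d : ℝ) ^ n * x) ((d : ℝ) ^ n * y) := by
  induction n with
  | zero => simpa using hxy
  | succ n ih => simpa only [pow_succ', mul_assoc] using h.mul ih

theorem exists_pow_mul_eq (h : IsInvariantLineLamination d R) (n : ℕ) (hx : R x x)
    (hz : R ((d : ℝ) ^ n * x) z) : ∃ (y : ℝ) (j : ℤ), R x y ∧ (d : ℝ) ^ n * y = z + j := by
  induction n generalizing z with
  | zero => exact ⟨z, 0, by simpa using hz, by simp⟩
  | succ n ih =>
    rw [pow_succ', mul_assoc] at hz
    obtain ⟨y, j, hy, hyz⟩ := h.exists_mul_eq (h.pow_mul n hx) hz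
    obtain ⟨y', j', hy', hyz'⟩ := ih hy
    refine ⟨y', j + d * j', hy', ?_⟩
    rw [pow_succ', mul_assoc, hyz', mul_add, hyz]
    push_cast
    ring

end IsInvariantLineLamination

section Approach

/-- The leaves of `R`, as points of the plane. -/
def leaves (R : ℝ → ℝ → Prop) : Set (ℝ × ℝ) := {p | R p.1 p.2}

/-- The two open quadrants of directions in which a leaf may be displaced without crossing itself:
`true` moves both endpoints inwards, `false` moves both outwards. -/
def cone : Bool → Set (ℝ × ℝ)
  | true => Ioi 0 ×ˢ Iio 0
  | false => Iio 0 ×ˢ Ioi 0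

/-- `p` is a limit of leaves of `R` from the side `σ`. -/
def IsApproached (R : ℝ → ℝ → Prop) (σ : Bool) (p : ℝ × ℝ) : Prop :=
  ∃ᶠ v in 𝓝[cone σ] 0, p + v ∈ leaves R

theorem map_add_nhdsWithin_cone_true (p : ℝ × ℝ) :
    map (p + ·) (𝓝[cone true] 0) = 𝓝[>] p.1 ×ˢ 𝓝[<] p.2 := by
  have himage : (p + ·) '' cone true = Ioi p.1 ×ˢ Iio p.2 := by
    ext q
    simp [cone, image_add_left, neg_add_eq_sub]
  rw [← nhdsWithin_prod_eq, ← himage]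
  simpa using (Homeomorph.addLeft p).isEmbedding.map_nhdsWithin_eq (cone true) 0

theorem isApproached_true_iff {R : ℝ → ℝ → Prop} {p : ℝ × ℝ} :
    IsApproached R true p ↔ ∃ᶠ q in 𝓝[>] p.1 ×ˢ 𝓝[<] p.2, R q.1 q.2 := by
  rw [← map_add_nhdsWithin_cone_true, frequently_map]
  rfl

end Approach

section RightLimit

/-- Leaves whose first endpoint decreases to `k` have `v` as a limit of their second endpoint. -/
def IsRightLimit (R : ℝ → ℝ → Prop) (k v : ℝ) : Prop :=
  ∃ᶠ p in 𝓝[>] k ×ˢ 𝓝 v, R p.1 p.2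

variable {d : ℕ} {R : ℝ → ℝ → Prop} {k v w : ℝ}

theorem IsLineLamination.not_isRightLimit_of_lt (h : IsLineLamination R) (hv : IsRightLimit R k v)
    (hkv : k < v) (hvw : v < w) (hwk : w < k + 1) : ¬IsRightLimit R k w := by
  intro hw
  obtain ⟨l, hkl, hlv⟩ := exists_between hkv
  obtain ⟨m, hvm, hmw⟩ := exists_between hvw
  obtain ⟨⟨u', w'⟩, huw', ⟨hku', hul'⟩, hmw', hwk'⟩ := (hw.and_eventually
    (prod_mem_prod (Ioo_mem_nhdsGT hkl) (Ioo_mem_nhds hmw hwk))).exists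
  have hclass : ∀ᶠ u in 𝓝[>] k, ¬R u' u :=
    nhdsWithin_mono k (fun _ ↦ ne_of_gt) (h.eventually_not u' k)
  obtain ⟨⟨u, v'⟩, huv, ⟨⟨hku, huu'⟩, hnot⟩, hlv', hvm'⟩ := (hv.and_eventually
    (prod_mem_prod (inter_mem (Ioo_mem_nhdsGT hku') hclass) (Ioo_mem_nhds hlv hvm))).exists
  exact hnot (h.symm (h.unlinked huu' (hul'.trans hlv') (hvm'.trans hmw') (by linarith) huv huw'))

namespace IsInvariantLineLamination

theorem isRightLimit_pow_mul_add (h : IsInvariantLineLamination d R) (hv : IsRightLimit R k v)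
    (n : ℕ) (i j : ℤ) : IsRightLimit R ((d : ℝ) ^ n * k + i) ((d : ℝ) ^ n * v + j) := by
  have hd := h.pow_pos n
  have hright : Tendsto (fun x ↦ (d : ℝ) ^ n * x + i) (𝓝[>] k) (𝓝[>] ((d : ℝ) ^ n * k + i)) := by
    refine tendsto_nhdsWithin_iff.2 ⟨Continuous.continuousWithinAt (by fun_prop), ?_⟩
    filter_upwards [self_mem_nhdsWithin] with x (hx : k < x)
    change (d : ℝ) ^ n * k + i < (d : ℝ) ^ n * x + i
    gcongr
  have hnear : Tendsto (fun x ↦ (d : ℝ) ^ n * x + j) (𝓝 v) (𝓝 ((d : ℝ) ^ n * v + j)) :=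
    Continuous.tendsto (by fun_prop) v
  exact (hright.prodMap hnear).frequently
    (hv.mono fun p hp ↦ (h.add_int_iff i j).2 (h.pow_mul n hp))

theorem exists_isRightLimit_mem_Ioo (h : IsInvariantLineLamination d R) (hk : ¬Irrational k)
    (hv : Irrational v) (hkv : IsRightLimit R k v) {k' : ℝ} {n : ℕ}
    (hk' : d ^ n • (k : Circle1) = k') :
    ∃ v' ∈ Ioo k' (k' + 1), IsRightLimit R k' v' ∧ d ^ n • (v : Circle1) = v' := by
  have hd : d ^ n ≠ 0 := by exact_mod_cast (h.pow_pos n).ne'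
  rw [← AddCircle.coe_nsmul, nsmul_eq_mul, Nat.cast_pow] at hk' ⊢
  obtain ⟨i, rfl⟩ := Circle1.coe_eq_coe_iff.1 hk'
  obtain ⟨j, hle, hlt⟩ := Circle1.exists_add_int_mem_Ico ((d : ℝ) ^ n * v) ((d : ℝ) ^ n * k + i)
  refine ⟨_, ⟨hle.lt_of_ne fun heq ↦ hk ?_, hlt⟩, h.isRightLimit_pow_mul_add hkv n i j,
    (Circle1.coe_add_intCast _ j).symm⟩
  have : Irrational ((d : ℝ) ^ n * k + i) := by
    rw [heq]
    exact_mod_cast (hv.natCast_mul hd).add_intCast j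
  exact Irrational.of_natCast_mul (d ^ n) (by exact_mod_cast this.of_add_intCast i)

-- If `d ^ n * k` has period `q`, both `d ^ n * v` and `d ^ (n + q) * v` are right limits of it, so
-- they agree by uniqueness and `v` is preperiodic.
theorem not_irrational_of_isRightLimit (h : IsInvariantLineLamination d R) (hk : ¬Irrational k)
    (hkv : IsRightLimit R k v) : ¬Irrational v := by
  intro hv
  obtain ⟨n, q, hq, hper⟩ := exists_pow_add_smul_eq_of_isOfFinAddOrder
    (Circle1.isOfFinAddOrder_coe_iff.2 hk) d
  have hk' : d ^ n • (k : Circle1) = ((d ^ n • k : ℝ) : Circle1) := (AddCircle.coe_nsmul ..).symm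
  obtain ⟨v₁, hv₁, hlim₁, hcoe₁⟩ := h.exists_isRightLimit_mem_Ioo hk hv hkv hk'
  obtain ⟨v₂, hv₂, hlim₂, hcoe₂⟩ := h.exists_isRightLimit_mem_Ioo hk hv hkv (hper.trans hk')
  rcases lt_trichotomy v₁ v₂ with hlt | rfl | hlt
  · exact h.not_isRightLimit_of_lt hlim₁ hv₁.1 hlt hv₂.2 hlim₂
  · exact Circle1.isOfFinAddOrder_coe_iff.1 (isOfFinAddOrder_of_pow_smul_eq h.two_le
      (Nat.lt_add_of_pos_right hq).ne (hcoe₁.trans hcoe₂.symm)) hv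
  · exact h.not_isRightLimit_of_lt hlim₂ hv₂.1 hlt hv₁.2 hlim₁

end IsInvariantLineLamination

end RightLimit

/-! ### Gaps of a class -/

section Gap

/-- `x` lies strictly under a leaf of `R` contained in the open interval `(a, b)`. -/
def IsCovered (R : ℝ → ℝ → Prop) (a b x : ℝ) : Prop :=
  ∃ u v, a < u ∧ u < x ∧ x < v ∧ v < b ∧ R u v

/-- A boundary leaf: `a` and `b` are equivalent and adjacent in their class. -/
structure IsGap (R : ℝ → ℝ → Prop) (a b : ℝ) : Prop where
  lt : a < b
  rel : R a b
  not_rel : ∀ x ∈ Ioo a b, ¬R a x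

variable {d : ℕ} {R : ℝ → ℝ → Prop} {a b k x y : ℝ}

theorem isOpen_setOf_isCovered : IsOpen {x | IsCovered R a b x} := by
  have : {x | IsCovered R a b x} = ⋃ (u) (v) (_ : a < u ∧ v < b ∧ R u v), Ioo u v := by
    ext x
    simp only [IsCovered, mem_ofPred_eq, mem_iUnion, mem_Ioo, exists_prop]
    tauto
  rw [this]
  exact isOpen_iUnion fun u ↦ isOpen_iUnion fun v ↦ isOpen_iUnion fun _ ↦ isOpen_Ioo

theorem IsGap.le_add_one (hgap : IsGap R a b) (h : IsLineLamination R) : b ≤ a + 1 := by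
  by_contra! hlt
  exact hgap.not_rel (a + 1) ⟨lt_add_one a, hlt⟩
    (by simpa using h.add_int 1 (h.left hgap.rel))

-- Overlapping leaves in an interval of length at most `1` merge.
theorem IsLineLamination.exists_rel_of_isCovered_Icc (h : IsLineLamination R) (hab : b ≤ a + 1)
    (hxy : x ≤ y) (hcov : ∀ z ∈ Icc x y, IsCovered R a b z) :
    ∃ u v, a < u ∧ u < x ∧ y < v ∧ v < b ∧ R u v := by
  set reach : Set ℝ := ⋃ (u) (v) (_ : a < u ∧ u < x ∧ v < b ∧ R u v), Iio v with hreach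
  have mem_reach {z : ℝ} : z ∈ reach ↔ ∃ u v, (a < u ∧ u < x ∧ v < b ∧ R u v) ∧ z < v := by
    simp only [hreach, mem_iUnion, exists_prop, mem_Iio]
  suffices hsub : Icc x y ⊆ reach by
    obtain ⟨u, v, ⟨hau, hux, hvb, huv⟩, hyv⟩ := mem_reach.1 (hsub (right_mem_Icc.2 hxy))
    exact ⟨u, v, hau, hux, hyv, hvb, huv⟩
  refine isPreconnected_Icc.subset_of_closure_inter_subset
    (isOpen_iUnion fun u ↦ isOpen_iUnion fun v ↦ isOpen_iUnion fun _ ↦ isOpen_Iio) ?_ ?_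
  · obtain ⟨u, v, hau, hux, hxv, hvb, huv⟩ := hcov x (left_mem_Icc.2 hxy)
    exact ⟨x, left_mem_Icc.2 hxy, mem_reach.2 ⟨u, v, ⟨hau, hux, hvb, huv⟩, hxv⟩⟩
  · rintro z ⟨hz, hzxy⟩
    obtain ⟨u', v', hau', huz', hzv', hvb', huv'⟩ := hcov z hzxy
    obtain ⟨z', ⟨huz, -⟩, hz'⟩ := mem_closure_iff.1 hz _ isOpen_Ioo ⟨huz', hzv'⟩
    obtain ⟨u, v, ⟨hau, hux, hvb, huv⟩, hzv⟩ := mem_reach.1 hz'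
    rcases lt_or_ge z v with hzv | hvz
    · exact mem_reach.2 ⟨u, v, ⟨hau, hux, hvb, huv⟩, hzv⟩
    rcases lt_or_ge u' x with hux' | hxu'
    · exact mem_reach.2 ⟨u', v', ⟨hau', hux', hvb', huv'⟩, hzv'⟩
    have huu' := h.unlinked (hux.trans_le hxu') (huz.trans hzv) (hvz.trans_lt hzv')
      (by linarith) huv huv'
    exact mem_reach.2 ⟨u, v', ⟨hau, hux, hvb', h.trans huu' huv'⟩, hzv'⟩

theorem IsLineLamination.exists_frequently_rel_of_isCovered (h : IsLineLamination R)
    (hab : b ≤ a + 1) (hcov : ∀ᶠ x in 𝓝[>] a, IsCovered R a b x) :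
    ∃ v ∈ Ioc a b, ∃ᶠ p in 𝓝[>] a ×ˢ 𝓝[Iio b] v, R p.1 p.2 := by
  obtain ⟨y, hay, hcov⟩ := mem_nhdsGT_iff_exists_Ioc_subset.1 hcov
  rw [mem_Ioi] at hay
  by_contra! hnone
  have hnone' : ∀ v ∈ Icc y b, {p : ℝ × ℝ | p.2 < b → ¬R p.1 p.2} ∈ 𝓝[>] a ×ˢ 𝓝 v := by
    intro v hv
    obtain ⟨s, hs, t, ht, hst⟩ := mem_prod_iff.1 (hnone v ⟨hay.trans_le hv.1, hv.2⟩)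
    filter_upwards [prod_mem_prod hs (mem_inf_principal.1 ht)] with p hp hpb
    exact hst ⟨hp.1, hp.2 hpb⟩
  obtain ⟨s, hs, t, ht, hst⟩ := mem_prod_iff.1
    (isCompact_Icc.mem_prod_nhdsSet_of_forall hnone')
  obtain ⟨x, hax, hxs⟩ := mem_nhdsGT_iff_exists_Ioc_subset.1 hs
  rw [mem_Ioi] at hax
  obtain ⟨u, v, hau, hux, hyv, hvb, huv⟩ := h.exists_rel_of_isCovered_Icc hab
    (min_le_right x y) fun z hz ↦ hcov ⟨(lt_min hax hay).trans_le hz.1, hz.2⟩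
  exact hst (mk_mem_prod (hxs ⟨hau, (hux.trans_le (min_le_left x y)).le⟩)
    (subset_of_mem_nhdsSet ht ⟨hyv.le, hvb.le⟩)) hvb huv

theorem IsInvariantLineLamination.exists_rel_and_frequently_of_isCovered
    (h : IsInvariantLineLamination d R) (hab : b ≤ a + 1) (ha : R a a)
    (hcov : ∀ᶠ x in 𝓝[>] a, IsCovered R a b x) :
    ∃ v ∈ Ioc a b, R a v ∧ ∃ᶠ p in 𝓝[>] a ×ˢ 𝓝[Iio b] v, R p.1 p.2 := by
  obtain ⟨v, hv, hfreq⟩ := h.exists_frequently_rel_of_isCovered hab hcov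
  have hlim : IsRightLimit R a v := hfreq.filter_mono (prod_mono_right _ nhdsWithin_le_nhds)
  refine ⟨v, hv, h.closed ha ?_ (hlim.filter_mono ?_), hfreq⟩
  · exact h.refl_iff.2 (h.not_irrational_of_isRightLimit (h.refl_iff.1 ha) hlim)
  · rw [nhds_prod_eq]
    exact prod_mono_left _ nhdsWithin_le_nhds

theorem IsGap.frequently_not_isCovered (hgap : IsGap R a b) (h : IsInvariantLineLamination d R)
    (happ : ¬IsApproached R true (a, b)) : ∃ᶠ x in 𝓝[>] a, ¬IsCovered R a b x := by
  intro hcov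
  simp only [not_not] at hcov
  obtain ⟨v, hv, hav, hfreq⟩ := h.exists_rel_and_frequently_of_isCovered
    (hgap.le_add_one h.toIsLineLamination) (h.left hgap.rel) hcov
  obtain rfl : v = b := hv.2.eq_of_not_lt fun hvb ↦ hgap.not_rel v ⟨hv.1, hvb⟩ hav
  exact happ (isApproached_true_iff.2 hfreq)

theorem IsInvariantLineLamination.exists_rel_right_of_not_isCovered
    (h : IsInvariantLineLamination d R) (hbk : b ≤ k + 1) (hk : R k k)
    (hunc : ¬IsCovered R a b k) (hcov : ∀ᶠ x in 𝓝[>] k, IsCovered R a b x) :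
    ∃ v ∈ Ioc k b, R k v := by
  by_contra! hnone
  have hcov' : ∀ᶠ x in 𝓝[>] k, IsCovered R k b x := by
    filter_upwards [hcov, self_mem_nhdsWithin] with x ⟨u, v, hau, hux, hxv, hvb, huv⟩ (hkx : k < x)
    have hku : k ≤ u := by
      by_contra! huk
      exact hunc ⟨u, v, hau, huk, hkx.trans hxv, hvb, huv⟩
    rcases hku.eq_or_lt with rfl | hku
    · exact absurd huv (hnone v ⟨hkx.trans hxv, hvb.le⟩)
    · exact ⟨u, v, hku, hux, hxv, hvb, huv⟩
  obtain ⟨v, hv, hkv, -⟩ := h.exists_rel_and_frequently_of_isCovered hbk hk hcov'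
  exact hnone v hv hkv

theorem IsLineLamination.isCovered_neg_iff (h : IsLineLamination R) :
    IsCovered (fun x y ↦ R (-x) (-y)) (-b) (-a) (-x) ↔ IsCovered R a b x := by
  constructor
  · rintro ⟨u, v, hu, hux, hxv, hv, huv⟩
    exact ⟨-v, -u, by linarith, by linarith, by linarith, by linarith, h.symm huv⟩
  · rintro ⟨u, v, hu, hux, hxv, hv, huv⟩
    exact ⟨-v, -u, by linarith, by linarith, by linarith, by linarith, by simpa using h.symm huv⟩

theorem IsInvariantLineLamination.exists_rel_left_of_not_isCovered
    (h : IsInvariantLineLamination d R) (hka : k ≤ a + 1) (hk : R k k)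
    (hunc : ¬IsCovered R a b k) (hcov : ∀ᶠ x in 𝓝[<] k, IsCovered R a b x) :
    ∃ v ∈ Ico a k, R v k := by
  have hcov' : ∀ᶠ x in 𝓝[>] (-k), IsCovered (fun x y ↦ R (-x) (-y)) (-b) (-a) x := by
    have hneg : Tendsto Neg.neg (𝓝[>] (-k)) (𝓝[<] k) := by
      simpa using tendsto_neg_nhdsGT_neg (a := k)
    filter_upwards [hneg.eventually hcov] with x hx
    simpa using h.isCovered_neg_iff.2 hx
  obtain ⟨v, hv, hkv⟩ := h.neg.exists_rel_right_of_not_isCovered (k := -k) (a := -b) (b := -a)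
    (by linarith) (by simpa using hk)
    (by rwa [h.isCovered_neg_iff]) hcov'
  exact ⟨-v, ⟨by linarith [hv.2], by linarith [hv.1]⟩, h.symm (by simpa using hkv)⟩

theorem IsGap.not_eventually_isCovered (hgap : IsGap R a b) (h : IsInvariantLineLamination d R)
    (hk : k ∈ Ioo a b) (hkk : R k k) (hunc : ¬IsCovered R a b k) :
    ¬∀ᶠ x in 𝓝[≠] k, IsCovered R a b x := by
  intro hcov
  have hlen := hgap.le_add_one h.toIsLineLamination
  obtain ⟨w, hw, hkw⟩ := h.exists_rel_right_of_not_isCovered (by linarith [hk.1]) hkk hunc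
    (nhdsWithin_mono k (fun _ ↦ ne_of_gt) hcov)
  obtain ⟨v, hv, hvk⟩ := h.exists_rel_left_of_not_isCovered (by linarith [hk.2]) hkk hunc
    (nhdsWithin_mono k (fun _ ↦ ne_of_lt) hcov)
  rcases hv.1.eq_or_lt with rfl | hav
  · exact hgap.not_rel k hk hvk
  rcases hw.2.eq_or_lt with rfl | hwb
  · exact hgap.not_rel k hk (h.trans hgap.rel (h.symm hkw))
  exact hunc ⟨v, w, hav, hv.2, hw.1, hwb, h.trans hvk hkw⟩

theorem exists_eventually_notMem_of_countable {X : Type*} [MetricSpace X] [CompleteSpace X]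
    {K : Set X} (hclosed : IsClosed K) (hcount : K.Countable) (hne : K.Nonempty) :
    ∃ k ∈ K, ∀ᶠ x in 𝓝[≠] k, x ∉ K := by
  have := hclosed.completeSpace_coe
  have := hcount.to_subtype
  have := hne.to_subtype
  obtain ⟨k, hk⟩ := nonempty_interior_of_iUnion_of_closed (f := fun k : K ↦ {k})
    (fun _ ↦ isClosed_singleton) (iUnion_of_singleton K)
  have hopen : {k} ∈ 𝓝 k := by
    obtain ⟨x, hx⟩ := hk
    have hxk : x = k := mem_singleton_iff.1 (interior_subset hx)
    subst hxk
    exact mem_interior_iff_mem_nhds.1 hx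
  obtain ⟨U, hU, hUk⟩ := (mem_nhds_subtype _ _ _).1 hopen
  refine ⟨k, k.2, ?_⟩
  filter_upwards [nhdsWithin_le_nhds hU, self_mem_nhdsWithin] with x hxU hxk hxK
  exact hxk (congrArg Subtype.val (hUk (a := ⟨x, hxK⟩) hxU))

theorem IsGap.frequently_irrational_not_isCovered (hgap : IsGap R a b)
    (h : IsInvariantLineLamination d R) (happ : ¬IsApproached R true (a, b)) :
    ∃ᶠ x in 𝓝[>] a, Irrational x ∧ ¬IsCovered R a b x := by
  intro hrat
  obtain ⟨e, ⟨hae, heb⟩, he⟩ := (mem_nhdsGT_iff_exists_mem_Ioc_Ioo_subset hgap.lt).1 hrat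
  have hrat' : ∀ x ∈ Ioo a e, ¬IsCovered R a b x → R x x := fun x hx hunc ↦
    h.refl_iff.2 fun hirr ↦ he hx ⟨hirr, hunc⟩
  obtain ⟨x, hunc, hax, hxe⟩ := ((hgap.frequently_not_isCovered h happ).and_eventually
    (Ioo_mem_nhdsGT hae)).exists
  obtain ⟨c, hc, hac, hcx⟩ := exists_irrational_btwn hax
  obtain ⟨c', hc', hxc', hce'⟩ := exists_irrational_btwn hxe
  set K : Set ℝ := Icc c c' \ {x | IsCovered R a b x}
  have hKrat : ∀ y ∈ K, ¬Irrational y := fun y hy ↦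
    h.refl_iff.1 (hrat' y ⟨hac.trans_le hy.1.1, hy.1.2.trans_lt hce'⟩ hy.2)
  have hKcount : K.Countable := (countable_range ((↑) : ℚ → ℝ)).mono fun y hy ↦
    not_not.1 (hKrat y hy)
  obtain ⟨k, hkK, hiso⟩ := exists_eventually_notMem_of_countable
    (isClosed_Icc.sdiff isOpen_setOf_isCovered) hKcount ⟨x, ⟨hcx.le, hxc'.le⟩, hunc⟩
  have hck : c < k := hkK.1.1.lt_of_ne fun heq ↦ hKrat k hkK (heq ▸ hc)
  have hkc : k < c' := hkK.1.2.lt_of_ne fun heq ↦ hKrat k hkK (heq ▸ hc')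
  refine hgap.not_eventually_isCovered h ⟨hac.trans hck, (hkc.trans hce').trans_le heb⟩
    (h.refl_iff.2 (hKrat k hkK)) hkK.2 ?_
  filter_upwards [hiso, nhdsWithin_le_nhds (Icc_mem_nhds hck hkc)] with y hyK hy
  exact not_not.1 fun hunc ↦ hyK ⟨hy, hunc⟩

end Gap

/-! ### Lifting to the line -/

section ClassGaps

variable {R : ℝ → ℝ → Prop} {x y : ℝ}

theorem IsLineLamination.finite_Icc_inter_class (h : IsLineLamination R) (c x y : ℝ) :
    {z ∈ Icc x y | R c z}.Finite := by
  by_contra hinf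
  obtain ⟨k, -, hk⟩ := Set.Infinite.exists_accPt_of_subset_isCompact hinf isCompact_Icc
    (sep_subset _ _)
  exact accPt_iff_frequently_nhdsNE.1 hk
    ((h.eventually_not c k).mono fun z hz hmem ↦ hz hmem.2)

theorem IsLineLamination.exists_isGap (h : IsLineLamination R) {q : ℝ → Prop} (hxy : x < y)
    (hR : R x y) (hqx : q x) (hqy : ¬q y) :
    ∃ s t, x ≤ s ∧ t ≤ y ∧ R x s ∧ IsGap R s t ∧ q s ∧ ¬q t := by
  have hfin := h.finite_Icc_inter_class x x y
  obtain ⟨s, ⟨⟨hs, hxs⟩, hqs⟩, hmax⟩ := (hfin.subset (sep_subset _ q)).exists_maximal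
    ⟨x, ⟨left_mem_Icc.2 hxy.le, h.left hR⟩, hqx⟩
  have hsy : s < y := hs.2.lt_of_ne fun heq ↦ hqy (heq ▸ hqs)
  obtain ⟨t, ⟨⟨ht, hxt⟩, hst⟩, hmin⟩ := (hfin.subset (sep_subset _ (s < ·))).exists_minimal
    ⟨y, ⟨right_mem_Icc.2 hxy.le, hR⟩, hsy⟩
  refine ⟨s, t, hs.1, ht.2, hxs, ⟨hst, h.trans (h.symm hxs) hxt, fun z hz hsz ↦ ?_⟩, hqs,
    fun hqt ↦ (hmax ⟨⟨ht, hxt⟩, hqt⟩ hst.le).not_gt hst⟩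
  have hzmem : z ∈ Icc x y := ⟨hs.1.trans hz.1.le, hz.2.le.trans ht.2⟩
  exact (hmin ⟨⟨hzmem, h.trans hxs hsz⟩, hz.1⟩ hz.2.le).not_gt hz.2

end ClassGaps

section Lift

/-- The lift to the line of a relation on the circle. -/
def lineRel (r : Circle1 → Circle1 → Prop) (x y : ℝ) : Prop := r x y

variable {r : Circle1 → Circle1 → Prop} {d : ℕ} {x y : ℝ}

theorem lineRel_of_frequently
    (hclosed : ∀ x ∈ ratC, ∀ y ∈ ratC,
      (x, y) ∈ closure {p : Circle1 × Circle1 | r p.1 p.2} → r x y)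
    (hx : (x : Circle1) ∈ ratC) (hy : (y : Circle1) ∈ ratC)
    (hfreq : ∃ᶠ p in 𝓝 (x, y), lineRel r p.1 p.2) : lineRel r x y := by
  have hcont : Continuous (Prod.map ((↑) : ℝ → Circle1) ((↑) : ℝ → Circle1)) :=
    (AddCircle.continuous_mk' 1).prodMap (AddCircle.continuous_mk' 1)
  exact hclosed x hx y hy (mem_closure_iff_frequently.2 ((hcont.tendsto (x, y)).frequently hfreq))

theorem coe_mul_eq_md (d : ℕ) (x : ℝ) : ((d * x : ℝ) : Circle1) = md d x := by
  rw [← nsmul_eq_mul, AddCircle.coe_nsmul, md]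

theorem RatLam.isLineLamination (lam : RatLam) : IsLineLamination (lineRel lam.rel) where
  refl_iff := by
    intro x
    rw [← Circle1.coe_mem_ratC_iff]
    exact ⟨fun hx ↦ (lam.rel_rat _ _ hx).1, lam.refl _⟩
  symm := lam.symm _ _
  trans := lam.trans _ _ _
  add_int j hxy := by rwa [lineRel, Circle1.coe_add_intCast]
  closed hx hy hfreq :=
    lineRel_of_frequently lam.closed' (lam.rel_rat _ _ hx).1 (lam.rel_rat _ _ hy).1 hfreq
  eventually_not c k := Circle1.eventually_coe_notMem (lam.finiteClass c) k
  unlinked {a b c e} hab hbc hce hea hac hbe := by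
    by_contra hne
    obtain ⟨x, -, hsub⟩ := lam.unlinkedClass _ _ hne
    have hcompl := connectedComponentIn_subset (relClass lam.rel (a : Circle1))ᶜ x
    rcases Circle1.coe_mem_or_coe_mem_of_isPreconnected hab hbc hce hea
      isPreconnected_connectedComponentIn (hsub (lam.refl _ (lam.rel_rat _ _ hbe).1))
      (hsub hbe) with ha | hc
    · exact hcompl ha (lam.refl _ (lam.rel_rat _ _ hac).1)
    · exact hcompl hc hac

theorem InvRatLam.rel_md (lam : InvRatLam d) {x y : Circle1} (hxy : lam.rel x y) :
    lam.rel (md d x) (md d y) :=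
  (lam.invariant x (lam.rel_rat _ _ hxy).1).1.subset (mem_image_of_mem _ hxy)

theorem InvRatLam.isInvariantLineLamination (lam : InvRatLam d) (hd : 2 ≤ d) :
    IsInvariantLineLamination d (lineRel lam.rel) where
  toIsLineLamination := lam.isLineLamination
  two_le := hd
  mul hxy := by
    rw [lineRel, coe_mul_eq_md, coe_mul_eq_md]
    exact lam.rel_md hxy
  exists_mul_eq {x z} hx hz := by
    rw [lineRel, coe_mul_eq_md] at hz
    obtain ⟨y, hxy, hyz⟩ := (lam.invariant x (lam.rel_rat _ _ hx).1).1.superset hz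
    obtain ⟨y, rfl⟩ := QuotientAddGroup.mk_surjective y
    obtain ⟨j, hj⟩ := Circle1.coe_eq_coe_iff.1 ((coe_mul_eq_md d y).trans hyz).symm
    exact ⟨y, j, hxy, hj⟩

end Lift

section Primitive

/-- The consequence of primitivity used on the line: of two distinct boundary leaves of one class,
at least one is a limit of leaves from the inside. -/
def IsPrimitiveLine (R : ℝ → ℝ → Prop) : Prop :=
  ∀ ⦃a b c e : ℝ⦄, IsGap R a b → IsGap R c e → b ≤ c → e ≤ a + 1 → R a c →
    IsApproached R true (a, b) ∨ IsApproached R true (c, e)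

variable {R : ℝ → ℝ → Prop} {d : ℕ} {a b θ θ' : ℝ}

theorem IsGap.not_rel_of_not_isCovered (hgap : IsGap R a b) (h : IsLineLamination R)
    (hθ : ¬IsCovered R a b θ) (hθ' : ¬IsCovered R a b θ') (haθ : a < θ) (hθb : θ' < b)
    {z w : ℝ} (hz : z ∈ Ioo θ θ') (hw : w ∈ Ioo θ' (θ + 1)) : ¬R z w := by
  intro hzw
  have haz : ¬R a z := hgap.not_rel z ⟨haθ.trans hz.1, hz.2.trans hθb⟩
  rcases lt_trichotomy w b with hwb | rfl | hbw
  · exact hθ' ⟨z, w, haθ.trans hz.1, hz.2, hw.1, hwb, hzw⟩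
  · exact haz (h.trans hgap.rel (h.symm hzw))
  rcases lt_trichotomy w (a + 1) with hwa | rfl | haw
  · exact haz (h.unlinked (haθ.trans hz.1) (hz.2.trans hθb) hbw hwa hgap.rel hzw)
  · exact haz (h.symm (by simpa using h.add_int (-1) hzw))
  · refine hθ ⟨w - 1, z, by linarith, by linarith [hw.2], hz.1, hz.2.trans hθb, ?_⟩
    exact h.symm (by simpa [sub_eq_add_neg] using h.add_int (-1) hzw)

theorem mem_connectedComponentIn_symm {X : Type*} [TopologicalSpace X] {S : Set X} {x y : X}
    (hy : y ∈ connectedComponentIn S x) : x ∈ connectedComponentIn S y :=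
  connectedComponentIn_eq hy ▸
    mem_connectedComponentIn (connectedComponentIn_nonempty_iff.1 ⟨y, hy⟩)

theorem Circle1.coe_mem_connectedComponentIn_compl {C : Set Circle1} (hle : θ ≤ θ')
    (hle' : θ' ≤ θ + 1)
    (hC : ∀ z ∈ Icc θ θ', (z : Circle1) ∈ C → ∀ w ∈ Icc θ' (θ + 1), (w : Circle1) ∉ C) :
    (θ' : Circle1) ∈ connectedComponentIn Cᶜ θ := by
  by_cases harc : ∃ z ∈ Icc θ θ', (z : Circle1) ∈ C
  · obtain ⟨z, hz, hzC⟩ := harc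
    have hθ := coe_mem_connectedComponentIn hle' (S := Cᶜ) (hC z hz hzC)
    rw [show ((θ + 1 : ℝ) : Circle1) = θ by simp] at hθ
    exact mem_connectedComponentIn_symm hθ
  · push Not at harc
    exact coe_mem_connectedComponentIn hle harc

theorem IsGap.unlRel_of_not_isCovered {lam : RatLam} (hgap : IsGap (lineRel lam.rel) a b)
    (hθ : ¬IsCovered (lineRel lam.rel) a b θ) (hθ' : ¬IsCovered (lineRel lam.rel) a b θ')
    (hirr : Irrational θ) (hirr' : Irrational θ') (haθ : a < θ) (hlt : θ < θ') (hθb : θ' < b) :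
    UnlRel lam.rel θ θ' := by
  have hrat : ∀ {θ : ℝ}, Irrational θ → (θ : Circle1) ∉ ratC := fun hirr hmem ↦
    Circle1.coe_mem_ratC_iff.1 hmem hirr
  have hlen := hgap.le_add_one lam.isLineLamination
  refine ⟨hrat hirr, hrat hirr', .inr fun x _ ↦
    Circle1.coe_mem_connectedComponentIn_compl hlt.le (by linarith) fun z hz hxz w hw hxw ↦ ?_⟩
  have hne : ∀ {u : ℝ}, lam.rel x u → ∀ {θ : ℝ}, Irrational θ → u ≠ θ := by
    rintro u hxu _ hirr rfl
    exact hrat hirr (lam.rel_rat _ _ hxu).2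
  refine hgap.not_rel_of_not_isCovered lam.isLineLamination hθ hθ' haθ hθb
    ⟨hz.1.lt_of_ne (hne hxz hirr).symm, hz.2.lt_of_ne (hne hxz hirr')⟩
    ⟨hw.1.lt_of_ne (hne hxw hirr').symm, hw.2.lt_of_ne (hne hxw ?_)⟩
    (lam.trans _ _ _ (lam.symm _ _ hxz) hxw)
  exact_mod_cast hirr.add_intCast 1

theorem UnlRel.symm {r : Circle1 → Circle1 → Prop} {θ θ' : Circle1} (hθ : UnlRel r θ θ') :
    UnlRel r θ' θ :=
  ⟨hθ.2.1, hθ.1, hθ.2.2.imp Eq.symm fun hcomp x hx ↦ mem_connectedComponentIn_symm (hcomp x hx)⟩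

theorem IsGap.exists_infinite_setOf_unlRel {lam : InvRatLam d} (hd : 2 ≤ d)
    (hgap : IsGap (lineRel lam.rel) a b) (happ : ¬IsApproached (lineRel lam.rel) true (a, b)) :
    ∃ θ ∈ Ioo a b, Irrational θ ∧ {θ' | UnlRel lam.rel θ θ'}.Infinite ∧
      (a : Circle1) ∈ closure {θ' | UnlRel lam.rel θ θ'} := by
  have hfreq := (hgap.frequently_irrational_not_isCovered
    (lam.isInvariantLineLamination hd) happ).and_eventually (Ioo_mem_nhdsGT hgap.lt)
  obtain ⟨θ, ⟨hirr, hθ⟩, hθab⟩ := hfreq.exists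
  have hnotrat : (θ : Circle1) ∉ ratC := fun hmem ↦ Circle1.coe_mem_ratC_iff.1 hmem hirr
  have hclosure : (a : Circle1) ∈ closure {θ' | UnlRel lam.rel θ θ'} := by
    refine mem_closure_iff_frequently.2 (((AddCircle.continuous_mk' 1).tendsto a).frequently
      ((hfreq.filter_mono nhdsWithin_le_nhds).mono ?_))
    rintro θ' ⟨⟨hirr', hθ'⟩, hθ'ab⟩
    rcases lt_trichotomy θ θ' with hlt | rfl | hlt
    · exact hgap.unlRel_of_not_isCovered hθ hθ' hirr hirr' hθab.1 hlt hθ'ab.2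
    · exact ⟨hnotrat, hnotrat, .inl rfl⟩
    · exact (hgap.unlRel_of_not_isCovered hθ' hθ hirr' hirr hθ'ab.1 hlt hθab.2).symm
  refine ⟨θ, hθab, hirr, fun hfin ↦ ?_, hclosure⟩
  rw [hfin.isClosed.closure_eq] at hclosure
  exact hclosure.2.1 (lam.rel_rat _ _ hgap.rel).1

theorem InvRatLam.isPrimitiveLine (lam : InvRatLam d) (hd : 2 ≤ d)
    (hprim : PrimitiveLam d lam.rel) : IsPrimitiveLine (lineRel lam.rel) := by
  intro a b c e hab hce hbc hea hac
  by_contra! ⟨happ, happ'⟩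
  obtain ⟨θ, hθ, hirr, hinf, hcl⟩ := hab.exists_infinite_setOf_unlRel hd happ
  obtain ⟨θ', hθ', hirr', hinf', hcl'⟩ := hce.exists_infinite_setOf_unlRel hd happ'
  have hnotrat : ∀ {θ : ℝ}, Irrational θ → (θ : Circle1) ∉ ratC := fun hirr hmem ↦
    Circle1.coe_mem_ratC_iff.1 hmem hirr
  have ha : (a : Circle1) ∈ ratC := (lam.rel_rat _ _ hac).1
  refine hprim ⟨_, _, a, ⟨θ, hnotrat hirr, rfl⟩, hinf, ⟨θ', hnotrat hirr', rfl⟩, hinf', ?_, ha,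
    ⟨a, lam.refl _ ha, hcl⟩, ⟨c, hac, hcl'⟩⟩
  intro heq
  have hunl : UnlRel lam.rel θ θ' :=
    (Set.ext_iff.1 heq θ').2 ⟨hnotrat hirr', hnotrat hirr', .inl rfl⟩
  have hcomp := (hunl.2.2.resolve_left
    (Circle1.coe_ne_coe (by linarith [hθ.2, hθ'.1]) (by linarith [hθ.1, hθ'.2]))) a ha
  have hcompl := connectedComponentIn_subset (relClass lam.rel (a : Circle1))ᶜ θ
  have hθ_mem : (θ : Circle1) ∈ (relClass lam.rel (a : Circle1))ᶜ := fun hmem ↦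
    hnotrat hirr (lam.rel_rat _ _ hmem).2
  rcases Circle1.coe_mem_or_coe_mem_of_isPreconnected hθ.1 hθ.2 (hbc.trans_lt hθ'.1)
    (hθ'.2.trans_le hea) isPreconnected_connectedComponentIn
    (mem_connectedComponentIn hθ_mem) hcomp with hm | hm
  · exact hcompl hm (lam.refl _ ha)
  · exact hcompl hm hab.rel

end Primitive

/-! ### Leaves near an approached leaf -/

section Torus

/-- The projection of the plane onto the torus. Being a leaf depends only on the projection. -/
def toTorus : ℝ × ℝ →+ Circle1 × Circle1 :=
  (QuotientAddGroup.mk' _).prodMap (QuotientAddGroup.mk' _)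

variable {R : ℝ → ℝ → Prop} {σ : Bool} {p q : ℝ × ℝ}

theorem toTorus_apply (p : ℝ × ℝ) : toTorus p = ((p.1 : Circle1), (p.2 : Circle1)) := rfl

theorem IsLineLamination.mem_leaves_congr (h : IsLineLamination R) (hpq : toTorus p = toTorus q) :
    p ∈ leaves R ↔ q ∈ leaves R :=
  h.rel_iff_of_coe_eq (congrArg Prod.fst hpq) (congrArg Prod.snd hpq)

theorem IsLineLamination.swap_mem_leaves_iff (h : IsLineLamination R) :
    p.swap ∈ leaves R ↔ p ∈ leaves R :=
  ⟨h.symm, h.symm⟩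

theorem toTorus_eq_add_snd_intCast (p : ℝ × ℝ) (j : ℤ) :
    toTorus p = toTorus (p.1, p.2 + j) := by
  rw [toTorus_apply, toTorus_apply, Circle1.coe_add_intCast]

theorem toTorus_add_congr (hpq : toTorus p = toTorus q) (v : ℝ × ℝ) :
    toTorus (p + v) = toTorus (q + v) := by
  rw [map_add, map_add, hpq]

theorem IsLineLamination.isApproached_congr (h : IsLineLamination R)
    (hpq : toTorus p = toTorus q) : IsApproached R σ p ↔ IsApproached R σ q :=
  frequently_congr (.of_forall fun v ↦ h.mem_leaves_congr (toTorus_add_congr hpq v))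

theorem map_swap_nhdsWithin_cone (σ : Bool) :
    map Prod.swap (𝓝[cone σ] (0 : ℝ × ℝ)) = 𝓝[cone !σ] 0 := by
  have htrue : 𝓝[cone true] (0 : ℝ × ℝ) = 𝓝[>] 0 ×ˢ 𝓝[<] 0 := nhdsWithin_prod_eq 0 0 _ _
  have hfalse : 𝓝[cone false] (0 : ℝ × ℝ) = 𝓝[<] 0 ×ˢ 𝓝[>] 0 := nhdsWithin_prod_eq 0 0 _ _
  cases σ <;> simpa only [Bool.not_true, Bool.not_false, htrue, hfalse] using prod_comm.symm

theorem IsLineLamination.isApproached_swap_iff (h : IsLineLamination R) :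
    IsApproached R (!σ) p.swap ↔ IsApproached R σ p := by
  rw [IsApproached, ← map_swap_nhdsWithin_cone, frequently_map]
  exact frequently_congr (.of_forall fun v ↦ h.swap_mem_leaves_iff (p := p + v))

theorem isApproached_induction {C : Bool → ℝ × ℝ → Prop}
    (translate : ∀ p q, toTorus p = toTorus q → C true p → C true q)
    (swap : ∀ p, C true p.swap → C false p)
    (base : ∀ s t : ℝ, s < t → t ≤ s + 1 → C true (s, t)) (σ : Bool) (p : ℝ × ℝ) : C σ p := by
  have htrue : ∀ p, C true p := fun p ↦ by
    obtain ⟨j, hj⟩ := Circle1.exists_add_int_mem_Ico (-p.2) (-(p.1 + 1))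
    refine translate _ _ (toTorus_eq_add_snd_intCast p (-j)).symm (base _ _ ?_ ?_) <;>
      push_cast <;> linarith [hj.1, hj.2]
  cases σ
  exacts [swap p (htrue _), htrue p]

end Torus

section Strip

variable {d : ℕ} {R : ℝ → ℝ → Prop} {σ : Bool} {p : ℝ × ℝ} {s t : ℝ}

theorem IsLineLamination.eventually_mem_Ioo_of_isApproached (h : IsLineLamination R)
    (happ : IsApproached R true (s, t)) (hR : R s t) (hst : s < t) (hts : t ≤ s + 1)
    {s' t' : ℝ} (hs' : s < s') (ht' : t' < t) :
    ∀ᶠ x in 𝓝[>] s, ∀ z ∈ Ico s (s + 1), R x z → z ∈ Ioo s s' ∪ Ioo t' t := by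
  obtain ⟨m, hsm, hmt⟩ := exists_between hst
  obtain ⟨⟨u, w⟩, huw, ⟨⟨hsu, hus'⟩, -, hum⟩, ⟨ht'w, hwt⟩, hmw, -⟩ :=
    ((isApproached_true_iff.1 happ).and_eventually
      (prod_mem_prod (inter_mem (Ioo_mem_nhdsGT hs') (Ioo_mem_nhdsGT hsm))
        (inter_mem (Ioo_mem_nhdsLT ht') (Ioo_mem_nhdsLT hmt)))).exists
  have hright := nhdsGT_le_nhdsNE s
  filter_upwards [Ioo_mem_nhdsGT hsu, hright (h.eventually_not s s),
    hright (h.eventually_not u s)] with x ⟨hsx, hxu⟩ hnsx hnux z ⟨hsz, hzs⟩ hxz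
  have hz_ne : ∀ {c}, ¬R c x → ∀ {b}, R c b → b ≠ z := by
    rintro c hcx _ hcz rfl
    exact hcx (h.trans hcz (h.symm hxz))
  have hsz := hsz.lt_of_ne (hz_ne hnsx (h.left hR))
  have hzt : z < t := by
    refine lt_of_le_of_ne (not_lt.1 fun htz ↦ hnsx ?_) (hz_ne hnsx hR).symm
    exact h.unlinked hsx (by dsimp only at *; linarith) htz hzs hR hxz
  rcases lt_trichotomy z u with hzu | rfl | huz
  · exact .inl ⟨hsz, hzu.trans hus'⟩
  · exact absurd rfl (hz_ne hnux (h.left huw))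
  · refine .inr ⟨ht'w.trans_le (not_lt.1 fun hzw ↦ hnux (h.symm ?_)), hzt⟩
    exact h.unlinked hxu huz hzw (by linarith) hxz huw

theorem Circle1.eventually_smul_coe_eq_zero_imp {n : ℕ} (hn : 0 < n) (k : ℝ) :
    ∀ᶠ x : ℝ in 𝓝 k, n • (x : Circle1) = 0 → x = k := by
  filter_upwards [eventually_nhdsWithin_iff.1
    (eventually_coe_notMem (AddCircle.finite_torsion 1 hn) k)] with x hx hzero
  exact by_contra fun hne ↦ hx hne hzero

theorem IsInvariantLineLamination.exists_rel_mem_Ico_of_smul_mem_leaves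
    (h : IsInvariantLineLamination d R) {n : ℕ} (hp : d ^ n • p ∈ leaves R) (a : ℝ) :
    ∃ z ∈ Ico a (a + 1), R p.1 z ∧ d ^ n • ((z - p.2 : ℝ) : Circle1) = 0 := by
  have hpow : ∀ x : ℝ, d ^ n • x = (d : ℝ) ^ n * x := fun x ↦ by simp
  simp only [leaves, mem_ofPred_eq, Prod.smul_fst, Prod.smul_snd, hpow] at hp
  have hrat : R p.1 p.1 := h.refl_iff.2 fun hirr ↦ by
    refine h.refl_iff.1 (h.left hp) ?_
    exact_mod_cast hirr.natCast_mul (m := d ^ n) (by exact_mod_cast (h.pow_pos n).ne')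
  obtain ⟨y, j, hy, hyj⟩ := h.exists_pow_mul_eq n hrat hp
  obtain ⟨i, hi⟩ := Circle1.exists_add_int_mem_Ico y a
  refine ⟨y + i, hi, h.add_int i hy, ?_⟩
  rw [AddCircle.coe_sub, Circle1.coe_add_intCast, smul_sub, ← AddCircle.coe_nsmul,
    ← AddCircle.coe_nsmul, hpow, hpow, hyj, Circle1.coe_add_intCast, sub_self]

theorem IsInvariantLineLamination.eventually_mem_leaves_of_smul_mem_of_lt
    (h : IsInvariantLineLamination d R) (happ : IsApproached R true (s, t)) (hR : R s t)
    (hst : s < t) (hts : t ≤ s + 1) (n : ℕ) :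
    ∀ᶠ q in 𝓝[>] s ×ˢ 𝓝[<] t, d ^ n • q ∈ leaves R → q ∈ leaves R := by
  have htorsion : ∀ a : ℝ, ∀ᶠ q in 𝓝 a ×ˢ 𝓝 t,
      d ^ n • ((q.1 - q.2 : ℝ) : Circle1) = 0 → q.1 - q.2 = a - t := fun a ↦ by
    rw [← nhds_prod_eq]
    exact (continuous_sub.tendsto (a, t)).eventually
      (Circle1.eventually_smul_coe_eq_zero_imp (by exact_mod_cast h.pow_pos n) (a - t))
  obtain ⟨A, hA, B, hB, hfar⟩ := eventually_prod_iff.1 (htorsion s)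
  obtain ⟨C, hC, D, hD, hnear⟩ := eventually_prod_iff.1 (htorsion t)
  obtain ⟨s', hs', hsA⟩ := (nhdsGT_basis s).eventually_iff.1 (hA.filter_mono nhdsWithin_le_nhds)
  obtain ⟨t', ht', htC⟩ := (nhdsLT_basis t).eventually_iff.1 (hC.filter_mono nhdsWithin_le_nhds)
  have hBD : ∀ᶠ w in 𝓝[<] t, B w ∧ D w := (hB.and hD).filter_mono nhdsWithin_le_nhds
  filter_upwards [(h.eventually_mem_Ioo_of_isApproached happ hR hst hts hs' ht').prod_mk
    (hBD.and self_mem_nhdsWithin)] with q ⟨hstrip, ⟨hqB, hqD⟩, hqt⟩ hq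
  obtain ⟨z, hz, hqz, hzero⟩ := h.exists_rel_mem_Ico_of_smul_mem_leaves hq s
  rcases hstrip z hz hqz with hzs | hzt
  · linarith [hfar (hsA hzs) hqB hzero, hzs.1, hqt]
  · have heq : z = q.2 := by linarith [hnear (htC hzt) hqD hzero]
    rwa [heq] at hqz

-- Classes near an approached leaf stay close to its endpoints, where `x ↦ d ^ n * x` is injective
-- mod `1` apart from the possible identification of the two endpoints themselves.
theorem IsInvariantLineLamination.eventually_mem_leaves_of_smul_mem
    (h : IsInvariantLineLamination d R) (happ : IsApproached R σ p) (hp : p ∈ leaves R) (n : ℕ) :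
    ∀ᶠ v in 𝓝[cone σ] 0, d ^ n • (p + v) ∈ leaves R → p + v ∈ leaves R := by
  induction σ, p using isApproached_induction with
  | translate p q hpq ih =>
    filter_upwards [ih ((h.isApproached_congr hpq).2 happ) ((h.mem_leaves_congr hpq).2 hp)]
      with v hv hqv
    have hpqv := toTorus_add_congr hpq v
    rw [← h.mem_leaves_congr hpqv]
    refine hv ((h.mem_leaves_congr ?_).2 hqv)
    rw [map_nsmul, map_nsmul, hpqv]
  | swap p ih =>
    have ih := ih (h.isApproached_swap_iff.2 happ) (h.swap_mem_leaves_iff.2 hp)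
    rw [show true = !false from rfl, ← map_swap_nhdsWithin_cone, eventually_map] at ih
    filter_upwards [ih] with v hv hpv
    exact h.symm (hv (h.symm hpv))
  | base s t hst hts =>
    have hbase := h.eventually_mem_leaves_of_smul_mem_of_lt happ hp hst hts n
    rwa [← map_add_nhdsWithin_cone_true (s, t), eventually_map] at hbase

end Strip

section Serial

variable {R : ℝ → ℝ → Prop} {σ : Bool} {p : ℝ × ℝ} {s t : ℝ}

theorem IsPrimitiveLine.exists_isApproached_of_class_subset (hprim : IsPrimitiveLine R)
    (h : IsLineLamination R) {s' t' x y : ℝ} (hts : t ≤ s + 1) (hst' : s' ≤ t')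
    (hx : x ∈ Ioo s s') (hy : y ∈ Ioo t' t) (hxy : R x y)
    (hclass : ∀ z ∈ Ico s (s + 1), R x z → z ∈ Ioo s s' ∪ Ioo t' t) :
    ∃ q ∈ Ioo s s' ×ˢ Ioo t' t, q ∈ leaves R ∧ ∃ τ, IsApproached R τ q := by
  have ht't : t' < t := hy.1.trans hy.2
  obtain ⟨a, b, hxa, hby, hRa, hgap, has', hbs'⟩ := h.exists_isGap (q := (· < s'))
    (hx.2.trans_le (hst'.trans hy.1.le)) hxy hx.2 (not_lt.2 (hst'.trans hy.1.le))
  have hyx : R y (x + 1) := by simpa using h.add_int 1 (h.symm hxy)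
  obtain ⟨c, e, hyc, hex, hRc, hgap', hct, het⟩ := h.exists_isGap (q := (· < t))
    (by linarith [hx.1, hy.2]) hyx hy.2 (not_lt.2 (by linarith [hx.1]))
  rw [not_lt] at hbs' het
  have hxb := h.trans hRa hgap.rel
  have hxe := h.trans hxy (h.trans hRc hgap'.rel)
  have hse : s + 1 ≤ e := not_lt.1 fun hes ↦ by
    rcases hclass e ⟨by linarith [hx.1, hx.2], hes⟩ hxe with hmem | hmem
    · linarith [hmem.2]
    · exact het.not_gt hmem.2
  have hb : b ∈ Ioo t' t :=
    (hclass b ⟨by linarith [hx.1, hx.2], by linarith [hy.2]⟩ hxb).resolve_left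
      fun hmem ↦ hbs'.not_gt hmem.2
  have hxe' : R x (e - 1) := by simpa [sub_eq_add_neg] using h.add_int (-1) hxe
  have he : e - 1 ∈ Ioo s s' :=
    (hclass _ ⟨by linarith, by linarith [hx.2, hy.1, hy.2]⟩ hxe').resolve_right
      fun hmem ↦ by linarith [hmem.1, hx.2]
  rcases hprim hgap hgap' (hby.trans hyc) (by linarith) (h.trans (h.symm hRa) (h.trans hxy hRc))
    with happ | happ
  · exact ⟨(a, b), ⟨⟨hx.1.trans_le hxa, has'⟩, hb⟩, hgap.rel, true, happ⟩
  · refine ⟨(e - 1, c), ⟨he, hy.1.trans_le hyc, hct⟩,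
      h.trans (h.symm hxe') (h.trans hxy hRc), false, ?_⟩
    refine h.isApproached_swap_iff.1 ((h.isApproached_congr ?_).1 happ)
    simpa [sub_eq_add_neg] using toTorus_eq_add_snd_intCast (c, e) (-1)

theorem IsPrimitiveLine.frequently_isApproached_of_lt (hprim : IsPrimitiveLine R)
    (h : IsLineLamination R) (happ : IsApproached R true (s, t)) (hR : R s t)
    (hst : s < t) (hts : t ≤ s + 1) :
    ∃ᶠ q in 𝓝[>] s ×ˢ 𝓝[<] t, q ∈ leaves R ∧ ∃ τ, IsApproached R τ q := by
  refine ((nhdsGT_basis s).prod (nhdsLT_basis t)).frequently_iff.2 fun ⟨s₀, t₀⟩ ⟨hs₀, ht₀⟩ ↦ ?_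
  obtain ⟨m, hsm, hmt⟩ := exists_between hst
  have hs' : s < min s₀ m := lt_min hs₀ hsm
  have ht' : max t₀ m < t := max_lt ht₀ hmt
  obtain ⟨⟨x, y⟩, hxy, ⟨hx, hclass⟩, hy⟩ := ((isApproached_true_iff.1 happ).and_eventually
    (prod_mem_prod (inter_mem (Ioo_mem_nhdsGT hs')
      (h.eventually_mem_Ioo_of_isApproached happ hR hst hts hs' ht')) (Ioo_mem_nhdsLT ht'))).exists
  obtain ⟨q, hq, hleaf⟩ := hprim.exists_isApproached_of_class_subset h hts
    ((min_le_right _ _).trans (le_max_right _ _)) hx hy hxy hclass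
  exact ⟨q, prod_mono (Ioo_subset_Ioo_right (min_le_left _ _))
    (Ioo_subset_Ioo_left (le_max_left _ _)) hq, hleaf⟩

theorem IsPrimitiveLine.frequently_isApproached (hprim : IsPrimitiveLine R)
    (h : IsLineLamination R) (happ : IsApproached R σ p) (hp : p ∈ leaves R) :
    ∃ᶠ v in 𝓝[cone σ] 0, p + v ∈ leaves R ∧ ∃ τ, IsApproached R τ (p + v) := by
  induction σ, p using isApproached_induction with
  | translate p q hpq ih =>
    refine (ih ((h.isApproached_congr hpq).2 happ) ((h.mem_leaves_congr hpq).2 hp)).mono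
      fun v hv ↦ ?_
    have hpqv := toTorus_add_congr hpq v
    exact hv.imp (h.mem_leaves_congr hpqv).1 fun ⟨τ, hτ⟩ ↦ ⟨τ, (h.isApproached_congr hpqv).1 hτ⟩
  | swap p ih =>
    have ih := ih (h.isApproached_swap_iff.2 happ) (h.swap_mem_leaves_iff.2 hp)
    rw [show true = !false from rfl, ← map_swap_nhdsWithin_cone, frequently_map] at ih
    exact ih.mono fun v hv ↦ hv.imp h.symm fun ⟨τ, hτ⟩ ↦ ⟨!τ, h.isApproached_swap_iff.2 hτ⟩
  | base s t hst hts =>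
    have hbase := hprim.frequently_isApproached_of_lt h happ hp hst hts
    rwa [← map_add_nhdsWithin_cone_true (s, t), frequently_map] at hbase

end Serial

/-! ### Returning leaves -/

section AffineContraction

variable {E : Type*} [NormedAddCommGroup E] [NormedSpace ℝ E] {A : Set E} {w : E} {c : ℝ}

theorem add_smul_inv_one_sub_smul {V : Type*} [AddCommGroup V] [Module ℝ V] {w : V} (hc : c ≠ 1) :
    w + c • (1 - c)⁻¹ • w = (1 - c)⁻¹ • w := by
  have : 1 - c ≠ 0 := sub_ne_zero.2 hc.symm
  match_scalars
  field_simp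
  ring

theorem inv_one_sub_smul_mem_closure_of_mapsTo (hc₀ : 0 ≤ c) (hc₁ : c < 1) (hA : A.Nonempty)
    (hmaps : MapsTo (w + c • ·) A A) : (1 - c)⁻¹ • w ∈ closure A := by
  obtain ⟨v, hv⟩ := hA
  set x := (1 - c)⁻¹ • w
  have hfix : w + c • x = x := add_smul_inv_one_sub_smul hc₁.ne
  have hiter : ∀ n : ℕ, (w + c • ·)^[n] v = x + c ^ n • (v - x) := fun n ↦ by
    induction n with
    | zero => simp
    | succ n ih =>
      rw [iterate_succ_apply', ih, smul_add, ← add_assoc, hfix, smul_smul, pow_succ']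
  have hlim : Tendsto (fun n ↦ (w + c • ·)^[n] v) atTop (𝓝 x) := by
    have hpow := (tendsto_pow_atTop_nhds_zero_of_lt_one hc₀ hc₁).smul_const (v - x)
    simpa [hiter] using hpow.const_add x
  exact mem_closure_of_tendsto hlim (.of_forall fun n ↦ hmaps.iterate n hv)

end AffineContraction

section Cone

variable {σ : Bool} {v w : ℝ × ℝ} {c : ℝ}

theorem isOpen_cone (σ : Bool) : IsOpen (cone σ) := by
  cases σ
  exacts [isOpen_Iio.prod isOpen_Ioi, isOpen_Ioi.prod isOpen_Iio]

theorem smul_mem_cone (hc : 0 < c) (hv : v ∈ cone σ) : c • v ∈ cone σ := by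
  cases σ <;> simp_all [cone, mul_neg_iff]

theorem add_mem_cone (hv : v ∈ cone σ) (hw : w ∈ cone σ) : v + w ∈ cone σ := by
  cases σ
  exacts [⟨add_neg (mem_Iio.1 hv.1) hw.1, add_pos (mem_Ioi.1 hv.2) hw.2⟩,
    ⟨add_pos (mem_Ioi.1 hv.1) hw.1, add_neg (mem_Iio.1 hv.2) hw.2⟩]

theorem tendsto_add_nhdsWithin_cone (σ : Bool) (p : ℝ × ℝ) :
    Tendsto (p + ·) (𝓝[cone σ] 0) (𝓝 p) :=
  (Continuous.tendsto' (by fun_prop) _ _ (add_zero p)).mono_left nhdsWithin_le_nhds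

theorem eventually_nhdsWithin_cone_iff {C : ℝ × ℝ → Prop} :
    (∀ᶠ v in 𝓝[cone σ] 0, C v) ↔ ∃ ε > 0, ∀ v ∈ cone σ, ‖v‖ < ε → C v := by
  rw [eventually_nhdsWithin_iff, Metric.eventually_nhds_iff]
  simp only [dist_zero_right]
  exact exists_congr fun ε ↦ and_congr_right fun _ ↦ forall_congr' fun v ↦ forall_comm

end Cone

section Return

variable {d : ℕ} {R : ℝ → ℝ → Prop} {σ : Bool} {p p' : ℝ × ℝ} {N N' : ℕ}

theorem IsLineLamination.isOfFinAddOrder_toTorus (h : IsLineLamination R) (hp : p ∈ leaves R) :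
    IsOfFinAddOrder (toTorus p) :=
  .prod_mk (Circle1.isOfFinAddOrder_coe_iff.2 (h.refl_iff.1 (h.left hp)))
    (Circle1.isOfFinAddOrder_coe_iff.2 (h.refl_iff.1 (h.right hp)))

theorem IsLineLamination.mem_leaves_of_mem_closure (h : IsLineLamination R)
    (hfin : IsOfFinAddOrder (toTorus p)) (hp : p ∈ closure (leaves R)) : p ∈ leaves R := by
  have hfst := (AddMonoidHom.fst Circle1 Circle1).isOfFinAddOrder hfin
  have hsnd := (AddMonoidHom.snd Circle1 Circle1).isOfFinAddOrder hfin
  exact h.closed (h.refl_iff.2 (Circle1.isOfFinAddOrder_coe_iff.1 hfst))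
    (h.refl_iff.2 (Circle1.isOfFinAddOrder_coe_iff.1 hsnd)) (mem_closure_iff_frequently.1 hp)

theorem IsInvariantLineLamination.smul_mem_leaves (h : IsInvariantLineLamination d R) (n : ℕ)
    (hp : p ∈ leaves R) : d ^ n • p ∈ leaves R := by
  simpa [leaves] using h.pow_mul n hp

theorem IsInvariantLineLamination.eventually_add_mem_leaves_of_smul_eq
    (h : IsInvariantLineLamination d R) (happ : IsApproached R σ p') (hp' : p' ∈ leaves R)
    (heq : d ^ N • toTorus p = d ^ N' • toTorus p') :
    ∀ᶠ w in 𝓝[cone σ] 0, ∀ u, d ^ N • u = d ^ N' • w → p + u ∈ leaves R → p' + w ∈ leaves R := by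
  filter_upwards [h.eventually_mem_leaves_of_smul_mem happ hp' N'] with w hw u huw hu
  refine hw ((h.mem_leaves_congr ?_).1 (h.smul_mem_leaves N hu))
  rw [smul_add, smul_add, map_add, map_add, map_nsmul _ _ p', map_nsmul _ _ p, heq, huw]

/-- Leaves near `p` on the side `σ` at distance less than `ε`, as displacements from `p`. -/
def nearLeaves (R : ℝ → ℝ → Prop) (σ : Bool) (p : ℝ × ℝ) (ε : ℝ) : Set (ℝ × ℝ) :=
  {v | v ∈ cone σ ∧ ‖v‖ < ε ∧ p + v ∈ leaves R}

theorem IsInvariantLineLamination.exists_inv_pow_smul_mem_nearLeaves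
    (h : IsInvariantLineLamination d R) (happ : IsApproached R σ p) (hp : p ∈ leaves R)
    {n q : ℕ} (hper : d ^ (n + q) • toTorus p = d ^ n • toTorus p) :
    ∃ ε > 0, ∀ k : ℕ, ∀ v ∈ nearLeaves R σ p ε, ((d : ℝ) ^ (q * k))⁻¹ • v ∈ nearLeaves R σ p ε := by
  obtain ⟨ε, hε, hball⟩ := eventually_nhdsWithin_cone_iff.1
    (h.eventually_add_mem_leaves_of_smul_eq happ hp hper.symm)
  have hstep : ∀ v ∈ nearLeaves R σ p ε, ((d : ℝ) ^ q)⁻¹ • v ∈ nearLeaves R σ p ε := by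
    rintro v ⟨hv, hvε, hleaf⟩
    have hcone := smul_mem_cone (inv_pos.2 (h.pow_pos q)) hv
    have hle : ((d : ℝ) ^ q)⁻¹ ≤ 1 :=
      inv_le_one_of_one_le₀ (one_le_pow₀ (by exact_mod_cast one_le_two.trans h.two_le))
    have hnorm : ‖((d : ℝ) ^ q)⁻¹ • v‖ < ε := by
      rw [norm_smul_of_nonneg (inv_pos.2 (h.pow_pos q)).le]
      exact (mul_le_of_le_one_left (norm_nonneg v) hle).trans_lt hvε
    refine ⟨hcone, hnorm, hball _ hcone hnorm v ?_ hleaf⟩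
    rw [pow_add, mul_smul, ← Nat.cast_smul_eq_nsmul ℝ (d ^ q), Nat.cast_pow,
      smul_inv_smul₀ (h.pow_pos q).ne']
  refine ⟨ε, hε, fun k v hv ↦ ?_⟩
  induction k with
  | zero => simpa using hv
  | succ k ih => simpa only [Nat.mul_succ, pow_add, mul_comm, mul_inv, mul_smul] using hstep _ ih

theorem tendsto_pow_div_pow_add_mul (hd : 2 ≤ d) {q : ℕ} (hq : 0 < q) (N N' : ℕ) :
    Tendsto (fun k ↦ (d : ℝ) ^ N / d ^ (N' + q * k)) atTop (𝓝 0) := by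
  have hd : (1 : ℝ) < d := by exact_mod_cast hd
  refine ((tendsto_pow_atTop_atTop_of_one_lt hd).comp ?_).const_div_atTop _
  exact StrictMono.tendsto_atTop fun k l hkl ↦ by gcongr

theorem IsInvariantLineLamination.eventually_mapsTo_nearLeaves
    (h : IsInvariantLineLamination d R) {q : ℕ} (hq : 0 < q) {ε : ℝ}
    (hcontract : ∀ k : ℕ, ∀ v ∈ nearLeaves R σ p ε,
      ((d : ℝ) ^ (q * k))⁻¹ • v ∈ nearLeaves R σ p ε)
    {w : ℝ × ℝ} (hw : w ∈ nearLeaves R σ p ε) (happ : IsApproached R σ (p + w))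
    (heq : d ^ N • toTorus p = d ^ N' • toTorus (p + w)) :
    ∀ᶠ k in atTop, MapsTo (w + ((d : ℝ) ^ N / d ^ (N' + q * k)) • ·)
      (nearLeaves R σ p ε) (nearLeaves R σ p ε) := by
  obtain ⟨δ, hδ, hball⟩ := eventually_nhdsWithin_cone_iff.1
    (h.eventually_add_mem_leaves_of_smul_eq happ hw.2.2 heq)
  have hsmall : ∀ᶠ k in atTop, (d : ℝ) ^ N / d ^ (N' + q * k) * ε < min δ (ε - ‖w‖) := by
    have hlim := (tendsto_pow_div_pow_add_mul h.two_le hq N N').mul_const ε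
    rw [zero_mul] at hlim
    exact hlim.eventually_lt_const (lt_min hδ (sub_pos.2 hw.2.1))
  filter_upwards [hsmall] with k hk v hv
  set c := (d : ℝ) ^ N / d ^ (N' + q * k) with hc
  have hcpos : 0 < c := div_pos (h.pow_pos _) (h.pow_pos _)
  have hcv : c • v ∈ cone σ := smul_mem_cone hcpos hv.1
  have hnorm : ‖c • v‖ < min δ (ε - ‖w‖) := by
    rw [norm_smul_of_nonneg hcpos.le]
    exact (mul_le_mul_of_nonneg_left hv.2.1.le hcpos.le).trans_lt hk
  refine ⟨add_mem_cone hw.1 hcv, (norm_add_le _ _).trans_lt ?_, ?_⟩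
  · linarith [hnorm.trans_le (min_le_right _ _)]
  rw [← add_assoc]
  refine hball _ hcv (hnorm.trans_le (min_le_left _ _)) _ ?_ (hcontract k v hv).2.2
  rw [← Nat.cast_smul_eq_nsmul ℝ, ← Nat.cast_smul_eq_nsmul ℝ, smul_smul, smul_smul, hc]
  congr 1
  have := h.pow_pos N'
  have := h.pow_pos (q * k)
  push_cast
  rw [pow_add]
  field_simp

theorem smul_toTorus_add_inv_one_sub_smul_eq {q k : ℕ}
    (hper : d ^ (N + q) • toTorus p = d ^ N • toTorus p) {w : ℝ × ℝ}
    (heq : d ^ N • toTorus p = d ^ N' • toTorus (p + w)) {c : ℝ}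
    (hc : (d : ℝ) ^ (N' + q * k) * c = d ^ N) (hc₁ : c ≠ 1) :
    d ^ (N' + q * k) • toTorus (p + (1 - c)⁻¹ • w) = d ^ N • toTorus (p + (1 - c)⁻¹ • w) := by
  set x := (1 - c)⁻¹ • w
  have hfix : p + x = p + w + c • x := by rw [add_assoc, add_smul_inv_one_sub_smul hc₁]
  have hscale : d ^ (N' + q * k) • c • x = d ^ N • x := by
    rw [← Nat.cast_smul_eq_nsmul ℝ, ← Nat.cast_smul_eq_nsmul ℝ, smul_smul]
    push_cast
    rw [hc]
  calc d ^ (N' + q * k) • toTorus (p + x)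
      = d ^ (q * k) • d ^ N' • toTorus (p + w) + toTorus (d ^ (N' + q * k) • c • x) := by
        rw [hfix, map_add, smul_add, pow_add, mul_comm, mul_smul, map_nsmul _ _ (c • x)]
    _ = d ^ (N + q * k) • toTorus p + toTorus (d ^ N • x) := by
        rw [← heq, hscale, ← mul_smul, ← pow_add, add_comm N]
    _ = d ^ N • toTorus (p + x) := by
        rw [pow_add_mul_smul_eq hper, map_nsmul, ← smul_add, map_add]

theorem IsInvariantLineLamination.eventually_fixedPoint_mem_leaves
    (h : IsInvariantLineLamination d R) {q : ℕ} (hq : 0 < q)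
    (hper : d ^ (N + q) • toTorus p = d ^ N • toTorus p) {ε : ℝ}
    (hcontract : ∀ k : ℕ, ∀ v ∈ nearLeaves R σ p ε,
      ((d : ℝ) ^ (q * k))⁻¹ • v ∈ nearLeaves R σ p ε)
    {w : ℝ × ℝ} (hw : w ∈ nearLeaves R σ p ε) (happ : IsApproached R σ (p + w))
    (heq : d ^ N • toTorus p = d ^ N' • toTorus (p + w)) :
    ∀ᶠ k in atTop, ∀ c : ℝ, c = d ^ N / d ^ (N' + q * k) →
      c < 1 ∧ p + (1 - c)⁻¹ • w ∈ leaves R ∧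
        ∃ r > 0, d ^ (N + r) • toTorus (p + (1 - c)⁻¹ • w) =
          d ^ N • toTorus (p + (1 - c)⁻¹ • w) := by
  filter_upwards [h.eventually_mapsTo_nearLeaves hq hcontract hw happ heq,
    (tendsto_pow_div_pow_add_mul h.two_le hq N N').eventually_lt_const one_pos,
    eventually_gt_atTop N] with k hmaps hc₁ hk c rfl
  set c := (d : ℝ) ^ N / d ^ (N' + q * k)
  have hNk : N < N' + q * k := hk.trans_le (by nlinarith)
  have hpre := smul_toTorus_add_inv_one_sub_smul_eq (k := k) hper heq
    (mul_div_cancel₀ _ (h.pow_pos _).ne') hc₁.ne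
  have hclosure := inv_one_sub_smul_mem_closure_of_mapsTo
    (div_pos (h.pow_pos _) (h.pow_pos _)).le hc₁ ⟨w, hw⟩ hmaps
  refine ⟨hc₁, h.mem_leaves_of_mem_closure
    (isOfFinAddOrder_of_pow_smul_eq h.two_le hNk.ne' hpre)
    (map_mem_closure (continuous_const_add p) hclosure fun v hv ↦ hv.2.2), ?_⟩
  refine ⟨N' + q * k - N, Nat.sub_pos_of_lt hNk, ?_⟩
  rw [Nat.add_sub_cancel' hNk.le]
  exact hpre

theorem IsInvariantLineLamination.frequently_smul_toTorus_eq
    (h : IsInvariantLineLamination d R) {q : ℕ} (hq : 0 < q)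
    (hper : d ^ (N + q) • toTorus p = d ^ N • toTorus p) {ε : ℝ}
    (hcontract : ∀ k : ℕ, ∀ v ∈ nearLeaves R σ p ε,
      ((d : ℝ) ^ (q * k))⁻¹ • v ∈ nearLeaves R σ p ε)
    {w : ℝ × ℝ} (hw : w ∈ nearLeaves R σ p ε) (happ : IsApproached R σ (p + w))
    (heq : d ^ N • toTorus p = d ^ N' • toTorus (p + w)) :
    ∃ᶠ v in 𝓝[cone σ] 0, p + w + v ∈ leaves R ∧
      ∃ r > 0, d ^ (N + r) • toTorus (p + w + v) = d ^ N • toTorus (p + w + v) := by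
  have hfixed := h.eventually_fixedPoint_mem_leaves hq hper hcontract hw happ heq
  have hlim := tendsto_pow_div_pow_add_mul h.two_le hq N N'
  set c : ℕ → ℝ := fun k ↦ (d : ℝ) ^ N / d ^ (N' + q * k)
  have hlim' : Tendsto (fun k ↦ c k • (1 - c k)⁻¹ • w) atTop (𝓝 0) := by
    simpa using hlim.smul (((hlim.const_sub 1).inv₀ (by simp)).smul_const w)
  have hcone : ∀ᶠ k in atTop, c k • (1 - c k)⁻¹ • w ∈ cone σ := by
    filter_upwards [hfixed] with k hk
    have hpos : 0 < c k := div_pos (h.pow_pos _) (h.pow_pos _)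
    exact smul_mem_cone hpos (smul_mem_cone (inv_pos.2 (sub_pos.2 (hk _ rfl).1)) hw.1)
  refine (tendsto_nhdsWithin_iff.2 ⟨hlim', hcone⟩).frequently (Eventually.frequently ?_)
  filter_upwards [hfixed] with k hk
  obtain ⟨hc₁, hleaf⟩ := hk _ rfl
  rwa [add_assoc, add_smul_inv_one_sub_smul hc₁.ne]

theorem IsInvariantLineLamination.exists_forall_return_frequently_smul_toTorus_eq
    (h : IsInvariantLineLamination d R) (happ : IsApproached R σ p) (hp : p ∈ leaves R) :
    ∃ ε > 0, ∀ w ∈ nearLeaves R σ p ε, IsApproached R σ (p + w) →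
      (∃ N N', d ^ N • toTorus p = d ^ N' • toTorus (p + w)) →
      ∃ N, ∃ᶠ v in 𝓝[cone σ] 0, p + w + v ∈ leaves R ∧
        ∃ r > 0, d ^ (N + r) • toTorus (p + w + v) = d ^ N • toTorus (p + w + v) := by
  obtain ⟨n, q, hq, hper⟩ :=
    exists_pow_add_smul_eq_of_isOfFinAddOrder (h.isOfFinAddOrder_toTorus hp) d
  obtain ⟨ε, hε, hcontract⟩ := h.exists_inv_pow_smul_mem_nearLeaves happ hp hper
  refine ⟨ε, hε, fun w hw happ' ⟨N, N', heq⟩ ↦ ⟨n + N, ?_⟩⟩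
  refine h.frequently_smul_toTorus_eq (N' := n + N') hq ?_ hcontract hw happ' ?_
  · rw [add_right_comm, add_comm, pow_add, mul_smul, hper, ← mul_smul, ← pow_add, add_comm]
  · rw [pow_add, mul_smul, heq, ← mul_smul, ← pow_add]

end Return

/-! ### Leaves avoiding an exceptional set -/

section Exceptional

variable {d : ℕ} {R : ℝ → ℝ → Prop} {P : Set Circle1} {σ : Bool} {p : ℝ × ℝ} {N n : ℕ} {z : Circle1}

theorem eventually_smul_coe_fst_notMem (hP : P.Finite) {n : ℕ} (hn : n ≠ 0) (σ : Bool) (p : ℝ × ℝ) :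
    ∀ᶠ v in 𝓝[cone σ] 0, n • ((p + v).1 : Circle1) ∉ P := by
  have hlim : Tendsto (fun v : ℝ × ℝ ↦ n * (p + v).1) (𝓝[cone σ] 0) (𝓝[≠] (n * p.1)) := by
    refine tendsto_nhdsWithin_iff.2 ⟨?_, ?_⟩
    · exact (Continuous.tendsto' (by fun_prop) _ _ (by simp)).mono_left nhdsWithin_le_nhds
    · filter_upwards [self_mem_nhdsWithin] with v hv
      have hv₀ : v.1 ≠ 0 := by
        cases σ
        exacts [hv.1.ne, hv.1.ne']
      simpa [hn] using hv₀
  filter_upwards [hlim.eventually (Circle1.eventually_coe_notMem hP _)] with v hv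
  rwa [← AddCircle.coe_nsmul, nsmul_eq_mul]

/-- A finite forward invariant set of angles that is a union of classes. The angles to be avoided
are those that enter it under iteration. -/
structure IsExceptionalSet (d : ℕ) (R : ℝ → ℝ → Prop) (P : Set Circle1) : Prop where
  finite : P.Finite
  smul_mem : ∀ z ∈ P, d • z ∈ P
  mem_of_rel : ∀ x y : ℝ, R x y → (x : Circle1) ∈ P → (y : Circle1) ∈ P

/-- The leaves whose first endpoint never enters `P` under iteration. When `P` is an exceptional
set, neither does the second endpoint. -/
def avoidingLeaves (d : ℕ) (R : ℝ → ℝ → Prop) (P : Set Circle1) : Set (ℝ × ℝ) :=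
  {q | q ∈ leaves R ∧ ∀ n : ℕ, d ^ n • (q.1 : Circle1) ∉ P}

theorem IsExceptionalSet.pow_smul_mem_of_le (hP : IsExceptionalSet d R P) {m : ℕ} (hmn : m ≤ n)
    (hz : d ^ m • z ∈ P) : d ^ n • z ∈ P := by
  induction n, hmn using Nat.le_induction with
  | base => exact hz
  | succ n _ ih => simpa only [pow_succ', mul_smul] using hP.smul_mem _ ih

theorem IsExceptionalSet.pow_smul_mem_of_pow_add_smul_eq (hP : IsExceptionalSet d R P) {r : ℕ}
    (hr : 0 < r) (hper : d ^ (N + r) • z = d ^ N • z) (hz : d ^ n • z ∈ P) : d ^ N • z ∈ P := by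
  rw [← pow_add_mul_smul_eq hper n]
  exact hP.pow_smul_mem_of_le (le_add_of_nonneg_of_le N.zero_le (Nat.le_mul_of_pos_left n hr)) hz

theorem IsExceptionalSet.pow_smul_snd_mem_iff (hP : IsExceptionalSet d R P)
    (h : IsInvariantLineLamination d R) (hp : p ∈ leaves R) :
    d ^ n • (p.2 : Circle1) ∈ P ↔ d ^ n • (p.1 : Circle1) ∈ P := by
  have hleaf := h.smul_mem_leaves n hp
  simp only [← AddCircle.coe_nsmul]
  exact ⟨hP.mem_of_rel _ _ (h.symm hleaf), hP.mem_of_rel _ _ hleaf⟩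

theorem IsExceptionalSet.mem_closure_avoidingLeaves_of_frequently (hP : IsExceptionalSet d R P)
    (h : IsInvariantLineLamination d R)
    (hper : ∃ᶠ v in 𝓝[cone σ] 0, p + v ∈ leaves R ∧
      ∃ r > 0, d ^ (N + r) • toTorus (p + v) = d ^ N • toTorus (p + v)) :
    p ∈ closure (avoidingLeaves d R P) := by
  refine mem_closure_iff_frequently.2 ((tendsto_add_nhdsWithin_cone σ p).frequently ?_)
  refine (hper.and_eventually
    (eventually_smul_coe_fst_notMem hP.finite (by exact_mod_cast (h.pow_pos N).ne') σ p)).mono ?_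
  rintro v ⟨⟨hleaf, r, hr, heq⟩, hv⟩
  exact ⟨hleaf, fun n hn ↦
    hv (hP.pow_smul_mem_of_pow_add_smul_eq hr (congrArg Prod.fst heq) hn)⟩

/-- Every approached leaf in `U` enters `T` under iteration, where `T` also records the side from
which the leaf is approached. -/
def ApproachedLeavesEnter (d : ℕ) (R : ℝ → ℝ → Prop) (U : Set (ℝ × ℝ))
    (T : Set (Bool × Circle1 × Circle1)) : Prop :=
  ∀ q ∈ U, q ∈ leaves R → ∀ τ, IsApproached R τ q → ∃ N : ℕ, (τ, d ^ N • toTorus q) ∈ T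

-- Two nearby approached leaves with a common eventual image produce preperiodic leaves nearby,
-- hence avoiding ones; so close to `p` the image of `p` does not occur again.
theorem IsExceptionalSet.exists_approachedLeavesEnter_of_insert (hP : IsExceptionalSet d R P)
    (h : IsInvariantLineLamination d R) {U : Set (ℝ × ℝ)} (hU : IsOpen U)
    (hdisj : Disjoint U (avoidingLeaves d R P)) {M : ℕ} {T : Set (Bool × Circle1 × Circle1)}
    (hT : ApproachedLeavesEnter d R U (insert (σ, d ^ M • toTorus p) T))
    (happ : IsApproached R σ p) (hp : p ∈ leaves R) :
    ∃ ε > 0, ApproachedLeavesEnter d R (U ∩ {q | q - p ∈ cone σ ∧ ‖q - p‖ < ε}) T := by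
  obtain ⟨ε, hε, hreturn⟩ := h.exists_forall_return_frequently_smul_toTorus_eq happ hp
  refine ⟨ε, hε, fun q ⟨hqU, hqp, hqε⟩ hq τ hτ ↦ ?_⟩
  obtain ⟨N, hN | hN⟩ := hT q hqU hq τ hτ
  · exfalso
    obtain ⟨rfl, hNM⟩ := Prod.mk.inj hN
    obtain ⟨w, rfl⟩ : ∃ w, q = p + w := ⟨q - p, (add_sub_cancel p q).symm⟩
    rw [add_sub_cancel_left] at hqp hqε
    obtain ⟨N', hper⟩ := hreturn w ⟨hqp, hqε, hq⟩ hτ ⟨M, N, hNM.symm⟩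
    exact (hdisj.closure_right hU).le_bot
      ⟨hqU, hP.mem_closure_avoidingLeaves_of_frequently h hper⟩
  · exact ⟨N, hN⟩

theorem IsExceptionalSet.not_isApproached_of_approachedLeavesEnter (hP : IsExceptionalSet d R P)
    (h : IsInvariantLineLamination d R) (hprim : IsPrimitiveLine R)
    {T : Set (Bool × Circle1 × Circle1)} (hT : T.Finite) {U : Set (ℝ × ℝ)} (hU : IsOpen U)
    (hdisj : Disjoint U (avoidingLeaves d R P)) (henter : ApproachedLeavesEnter d R U T) :
    ∀ p ∈ U, p ∈ leaves R → ∀ σ, ¬IsApproached R σ p := by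
  induction T, hT using Set.Finite.induction_on generalizing U with
  | empty => exact fun p hpU hp σ happ ↦ (henter p hpU hp σ happ).choose_spec
  | @insert label T _ _ ih =>
    by_cases hlabel : ∃ p ∈ U, p ∈ leaves R ∧
      ∃ σ, IsApproached R σ p ∧ ∃ M : ℕ, (σ, d ^ M • toTorus p) = label
    · obtain ⟨p, hpU, hp, σ, happ, M, rfl⟩ := hlabel
      obtain ⟨ε, hε, henter'⟩ :=
        hP.exists_approachedLeavesEnter_of_insert h hU hdisj henter happ hp
      have hopen : IsOpen {q : ℝ × ℝ | q - p ∈ cone σ ∧ ‖q - p‖ < ε} :=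
        ((isOpen_cone σ).preimage (by fun_prop)).inter
          (isOpen_lt (f := fun q : ℝ × ℝ ↦ ‖q - p‖) (by fun_prop) continuous_const)
      have hnone := ih (hU.inter hopen) (hdisj.mono_left inter_subset_left) henter'
      obtain ⟨v, ⟨hleaf, τ, hτ⟩, hvU, hv, hvε⟩ :=
        ((hprim.frequently_isApproached h.toIsLineLamination happ hp).and_eventually
          (((tendsto_add_nhdsWithin_cone σ p).eventually (hU.mem_nhds hpU)).and
            (eventually_nhdsWithin_cone_iff.2 ⟨ε, hε, fun v hv hvε ↦ And.intro hv hvε⟩))).exists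
      exact absurd hτ (hnone _ ⟨hvU, by simpa using hv, by simpa using hvε⟩ hleaf τ)
    · refine ih hU hdisj fun q hqU hq τ hτ ↦ ?_
      obtain ⟨N, hN | hN⟩ := henter q hqU hq τ hτ
      exacts [absurd ⟨q, hqU, hq, τ, hτ, N, hN⟩ hlabel, ⟨N, hN⟩]

theorem IsExceptionalSet.mem_closure_avoidingLeaves (hP : IsExceptionalSet d R P)
    (h : IsInvariantLineLamination d R) (hprim : IsPrimitiveLine R) (happ : IsApproached R σ p)
    (hp : p ∈ leaves R) : p ∈ closure (avoidingLeaves d R P) := by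
  by_contra hclosure
  refine hP.not_isApproached_of_approachedLeavesEnter h hprim
    (finite_univ.prod (hP.finite.prod hP.finite)) isClosed_closure.isOpen_compl
    (disjoint_compl_left.mono_right subset_closure) ?_ p hclosure hp σ happ
  intro q hqU hq τ _
  obtain ⟨n, hn⟩ : ∃ n : ℕ, d ^ n • (q.1 : Circle1) ∈ P := by
    by_contra! hn
    exact hqU (subset_closure ⟨hq, hn⟩)
  exact ⟨n, mem_univ τ, hn, (hP.pow_smul_snd_mem_iff h hq).2 hn⟩

end Exceptional

section Restriction

variable {d : ℕ} {F : Set Circle1} {r : Circle1 → Circle1 → Prop}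

/-- The union of the classes that meet the forward orbit of `F`. -/
def InvRatLam.orbitClasses (lam : InvRatLam d) (F : Set Circle1) : Set Circle1 :=
  {z | ∃ f ∈ F, ∃ m : ℕ, lam.rel (d ^ m • f) z}

theorem InvRatLam.isExceptionalSet_orbitClasses (lam : InvRatLam d) (hF : F.Finite)
    (hFrat : F ⊆ ratC) : IsExceptionalSet d (lineRel lam.rel) (lam.orbitClasses F) where
  finite := by
    have hunion : lam.orbitClasses F =
        ⋃ f ∈ F, ⋃ z ∈ range fun m : ℕ ↦ d ^ m • f, relClass lam.rel z := by
      ext z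
      simp [orbitClasses, relClass]
    rw [hunion]
    refine hF.biUnion fun f hf ↦ Finite.biUnion ?_ fun z _ ↦ lam.finiteClass z
    refine (isOfFinAddOrder_of_mem_ratC (hFrat hf)).finite_multiples.subset ?_
    rintro _ ⟨m, rfl⟩
    exact ⟨d ^ m, rfl⟩
  smul_mem := by
    rintro z ⟨f, hf, m, hrel⟩
    refine ⟨f, hf, m + 1, ?_⟩
    rw [pow_succ', mul_smul]
    exact lam.rel_md hrel
  mem_of_rel := by
    rintro x y hxy ⟨f, hf, m, hrel⟩
    exact ⟨f, hf, m, lam.trans _ _ _ hrel hxy⟩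

theorem InvRatLam.exists_pow_smul_mem_orbitClasses (lam : InvRatLam d) (hFrat : F ⊆ ratC)
    {z : Circle1} (hz : z ∈ grandOrbit d F) : ∃ n : ℕ, d ^ n • z ∈ lam.orbitClasses F := by
  obtain ⟨n, m, f, hf, hfz⟩ := hz
  rw [md_iterate, md_iterate] at hfz
  exact ⟨n, f, hf, m, hfz ▸ lam.refl _ (smul_mem_ratC _ (hFrat hf))⟩

theorem InvRatLam.rel_of_isApproached (lam : InvRatLam d) (hd : 2 ≤ d)
    (hprim : PrimitiveLam d lam.rel) (hF : F.Finite) (hFrat : F ⊆ ratC) (hr : ClosedEqvRat r)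
    (hsub : ∀ a b, lam.rel a b → a ∉ grandOrbit d F → b ∉ grandOrbit d F → r a b)
    {σ : Bool} {p : ℝ × ℝ} (happ : IsApproached (lineRel lam.rel) σ p)
    (hp : p ∈ leaves (lineRel lam.rel)) : lineRel r p.1 p.2 := by
  obtain ⟨-, -, -, -, hclosed⟩ := hr
  obtain ⟨hfst, hsnd⟩ := lam.rel_rat _ _ hp
  have h := lam.isInvariantLineLamination hd
  have hP := lam.isExceptionalSet_orbitClasses hF hFrat
  have hclosure := hP.mem_closure_avoidingLeaves h (lam.isPrimitiveLine hd hprim) happ hp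
  refine lineRel_of_frequently hclosed hfst hsnd
    ((mem_closure_iff_frequently.1 hclosure).mono fun q ⟨hq, havoid⟩ ↦ ?_)
  refine hsub _ _ hq (fun hq₁ ↦ ?_) fun hq₂ ↦ ?_
  · obtain ⟨n, hn⟩ := lam.exists_pow_smul_mem_orbitClasses hFrat hq₁
    exact havoid n hn
  · obtain ⟨n, hn⟩ := lam.exists_pow_smul_mem_orbitClasses hFrat hq₂
    exact havoid n ((hP.pow_smul_snd_mem_iff h hq).1 hn)

-- If `x` and `y` were not `r`-related, each of the two arcs between them would contain a gap of
-- the class of `x` with `r`-unrelated endpoints, yet one of any two gaps is approached.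
theorem IsPrimitiveLine.lineRel_of_forall_isApproached {R : ℝ → ℝ → Prop}
    (hprim : IsPrimitiveLine R) (h : IsLineLamination R) (hr : ClosedEqvRat r)
    (happ : ∀ p ∈ leaves R, IsApproached R true p → lineRel r p.1 p.2)
    {x y : ℝ} (hxy : R x y) : lineRel r x y := by
  obtain ⟨-, hrefl, hsymm, htrans, -⟩ := hr
  obtain ⟨j, hj⟩ := Circle1.exists_add_int_mem_Ico y x
  have hxy' := h.add_int j hxy
  rw [lineRel, ← Circle1.coe_add_intCast y j]
  generalize y + j = y at hj hxy'
  have hself : ∀ {z}, R x z → r z z := fun hz ↦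
    hrefl _ (Circle1.coe_mem_ratC_iff.2 (h.refl_iff.1 (h.right hz)))
  rcases hj.1.eq_or_lt with rfl | hlt
  · exact hself hxy'
  by_contra hnot
  have hyx : R y (x + 1) := by simpa using h.add_int 1 (h.symm hxy')
  have hnot' : ¬lineRel r y (x + 1) := by
    simpa [lineRel] using fun hr' ↦ hnot (hsymm _ _ hr')
  obtain ⟨a, b, hxa, hby, hRa, hgap, hra, hrb⟩ :=
    h.exists_isGap (q := lineRel r x) hlt hxy' (hself (h.left hxy')) hnot
  obtain ⟨c, e, hyc, hex, hRc, hgap', hrc, hre⟩ :=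
    h.exists_isGap (q := lineRel r y) hj.2 hyx (hself hxy') hnot'
  rcases hprim hgap hgap' (hby.trans hyc) (by linarith) (h.trans (h.symm hRa) (h.trans hxy' hRc))
    with hab | hce
  · exact hrb (htrans _ _ _ hra (happ _ hgap.rel hab))
  · exact hre (htrans _ _ _ hrc (happ _ hgap'.rel hce))

theorem RatLam.closedEqvRat (lam : RatLam) : ClosedEqvRat lam.rel :=
  ⟨lam.rel_rat, lam.refl, lam.symm, lam.trans, lam.closed'⟩

end Restriction

/-- If `λ₀` is a non-trivial primitive `d`-invariant rational
lamination and `E` is the `m_d`-grand orbit of a finite set, then `λ₀` is the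
smallest closed equivalence relation on `ℚ/ℤ` containing the restriction of `λ₀`
away from `E`. -/
theorem primitive_generated_by_restriction (d : ℕ) (hd : 2 ≤ d)
    (lam : InvRatLam d) (hnt : ∃ x y, lam.rel x y ∧ x ≠ y)
    (hprim : PrimitiveLam d lam.rel)
    (F : Set Circle1) (hF : F.Finite) (hFrat : F ⊆ ratC) :
    ∀ x y : Circle1, lam.rel x y ↔
      ∀ r : Circle1 → Circle1 → Prop, ClosedEqvRat r →
        (∀ a b, lam.rel a b → a ∉ grandOrbit d F → b ∉ grandOrbit d F → r a b) →
        r x y := by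
  refine fun x y ↦ ⟨fun hxy r hr hsub ↦ ?_, fun hall ↦
    hall lam.rel lam.closedEqvRat fun a b hab _ _ ↦ hab⟩
  obtain ⟨x, rfl⟩ := QuotientAddGroup.mk_surjective x
  obtain ⟨y, rfl⟩ := QuotientAddGroup.mk_surjective y
  exact (lam.isPrimitiveLine hd hprim).lineRel_of_forall_isApproached lam.isLineLamination hr
    (fun p hp happ ↦ lam.rel_of_isApproached hd hprim hF hFrat hr hsub happ hp) hxy
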